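/- Let G be a unified chain graph (UCG) over a finite vertex set V and let p = N(0, Σ) be a Gaussian distribution on ℝ^V with Σ positive definite. Then p satisfies Equation 1 (the chain-component factorization) and the zero restrictions of Equations 6–8 with respect to G if and only if p satisfies the global Markov property with respect to G, i.e. X ⊥_p Y | Z for all pairwise disjoint X, Y, Z ⊆ V such that X ⊥_G Y | Z. -/

import Mathlib

open Matrix MeasureTheory ProbabilityTheory

attribute [local instance] Classical.propDecidable

noncomputable section

variable {V : Type*}

/-- The submatrix of `S` with rows indexed by `X` and columns indexed by `Y`. -/
def msub (S : Matrix V V ℝ) (X Y : Finset V) : Matrix X Y ℝ :=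
  Matrix.of fun i j => S i.1 j.1

/-- Conditional independence `X ⊥ Y | Z` for a centered Gaussian distribution with
positive definite covariance matrix `S`:  `Σ_{X,Y} − Σ_{X,Z} (Σ_{Z,Z})⁻¹ Σ_{Z,Y} = 0`. -/
def gaussCI [Fintype V] [DecidableEq V] (S : Matrix V V ℝ) (X Y Z : Finset V) : Prop :=
  msub S X Y - msub S X Z * (msub S Z Z)⁻¹ * msub S Z Y = 0

/-- Pairwise disjointness of three sets. -/
def PDisj (X Y Z : Finset V) : Prop :=
  Disjoint X Y ∧ Disjoint X Z ∧ Disjoint Y Z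

/-- Pairwise disjointness of four sets. -/
def PDisj4 (X Y W Z : Finset V) : Prop :=
  Disjoint X Y ∧ Disjoint X W ∧ Disjoint X Z ∧ Disjoint Y W ∧ Disjoint Y Z ∧ Disjoint W Z

/-- A graph with three kinds of edges: undirected (`undir`), solid directed (`solid`,
written `A → B`) and dashed directed (`dashed`, written `A ⇢ B`).  No axioms are imposed. -/
structure PreGraph (V : Type*) where
  undir : V → V → Prop
  solid : V → V → Prop
  dashed : V → V → Prop

namespace PreGraph

variable (G : PreGraph V)

/-- There is an undirected edge between `a` and `b`. -/
def und (a b : V) : Prop := G.undir a b ∨ G.undir b a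

/-- `a` and `b` are adjacent. -/
def adj (a b : V) : Prop :=
  G.und a b ∨ G.solid a b ∨ G.solid b a ∨ G.dashed a b ∨ G.dashed b a

/-- The edge between `a` and `b` is undirected or directed (solid or dashed) from `a` to `b`. -/
def fwd (a b : V) : Prop := G.und a b ∨ G.solid a b ∨ G.dashed a b

/-- A route in `G`: a sequence of nodes `nodes 0, nodes 1, …, nodes len` such that
consecutive nodes are adjacent. -/
structure Route (G : PreGraph V) where
  len : ℕ
  nodes : ℕ → V
  adj_step : ∀ i < len, G.adj (nodes i) (nodes (i + 1))

/-- `c` is a collider node between `a` and `b`:  `a ⇢ c ⇠ b`, `a ⇢ c − b` (in either of the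
two traversal directions) or `a ⇢ c ← b` (in either of the two traversal directions). -/
def colliderTriple (a c b : V) : Prop :=
  (G.dashed a c ∧ G.dashed b c) ∨
  (G.dashed a c ∧ G.und c b) ∨ (G.und a c ∧ G.dashed b c) ∨
  (G.dashed a c ∧ G.solid b c) ∨ (G.solid a c ∧ G.dashed b c)

variable {G} in
/-- The node at position `k` of the route `ρ` is a collider node of `ρ`. -/
def Route.colliderNodeAt (ρ : G.Route) (k : ℕ) : Prop :=
  1 ≤ k ∧ k < ρ.len ∧ G.colliderTriple (ρ.nodes (k - 1)) (ρ.nodes k) (ρ.nodes (k + 1))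

variable {G} in
/-- The positions `p, …, q` of `ρ` form a collider section of `ρ`, i.e. a maximal undirected
subroute `C1 − ⋯ − Cn` of `ρ` such that `A → C1 − ⋯ − Cn ← B` is a subroute of `ρ`. -/
def Route.colliderSectionOcc (ρ : G.Route) (p q : ℕ) : Prop :=
  1 ≤ p ∧ p ≤ q ∧ q + 1 ≤ ρ.len ∧
  (∀ m, p ≤ m → m < q → G.und (ρ.nodes m) (ρ.nodes (m + 1))) ∧
  G.solid (ρ.nodes (p - 1)) (ρ.nodes p) ∧ G.solid (ρ.nodes (q + 1)) (ρ.nodes q)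

variable {G} in
/-- The node at position `k` of `ρ` lies in a collider section of `ρ`. -/
def Route.inColliderSectionAt (ρ : G.Route) (k : ℕ) : Prop :=
  ∃ p q, ρ.colliderSectionOcc p q ∧ p ≤ k ∧ k ≤ q

variable {G} in
/-- The route `ρ` is `Z`-open: (i) all collider nodes are in `Z`, (ii) every collider
section contains some node of `Z`, and (iii) every node which is neither a collider node
nor inside a collider section is outside `Z`. -/
def Route.IsZOpen (ρ : G.Route) (Z : Finset V) : Prop :=
  (∀ k, ρ.colliderNodeAt k → ρ.nodes k ∈ Z) ∧
  (∀ p q, ρ.colliderSectionOcc p q → ∃ m, p ≤ m ∧ m ≤ q ∧ ρ.nodes m ∈ Z) ∧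
  (∀ k ≤ ρ.len, ¬ ρ.colliderNodeAt k → ¬ ρ.inColliderSectionAt k → ρ.nodes k ∉ Z)

variable {G} in
/-- A pure collider route (with at least one edge): every intermediate node is a collider
node or lies in a collider section of the route. -/
def Route.IsPureCollider (ρ : G.Route) : Prop :=
  1 ≤ ρ.len ∧ ∀ k, 0 < k → k < ρ.len → ρ.colliderNodeAt k ∨ ρ.inColliderSectionAt k

/-- Separation `X ⊥_G Y | Z`: there is no `Z`-open route in `G` between a node of `X` and a
node of `Y`. -/
def Sep (X Y Z : Finset V) : Prop :=
  ¬ ∃ ρ : G.Route,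
      ((ρ.nodes 0 ∈ X ∧ ρ.nodes ρ.len ∈ Y) ∨ (ρ.nodes 0 ∈ Y ∧ ρ.nodes ρ.len ∈ X)) ∧
      ρ.IsZOpen Z

section Finite

variable [Fintype V] [DecidableEq V]

/-- The fathers of `X`: nodes `b` with `b → a` in `G` for some `a ∈ X`. -/
def fa (X : Finset V) : Finset V := Finset.univ.filter fun b => ∃ a ∈ X, G.solid b a

/-- The mothers of `X`: nodes `b` with `b ⇢ a` in `G` for some `a ∈ X`. -/
def mo (X : Finset V) : Finset V := Finset.univ.filter fun b => ∃ a ∈ X, G.dashed b a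

/-- The parents of `X`. -/
def pa (X : Finset V) : Finset V := G.fa X ∪ G.mo X

/-- The neighbors of `X`: nodes `b` with `b − a` in `G` for some `a ∈ X`. -/
def nb (X : Finset V) : Finset V := Finset.univ.filter fun b => ∃ a ∈ X, G.und b a

/-- There is a descending route from `a` to `b`: all edges undirected or directed in the
direction of travel, containing at least one directed edge. -/
def descends (a b : V) : Prop :=
  ∃ (n : ℕ) (f : ℕ → V), f 0 = a ∧ f n = b ∧ (∀ i < n, G.fwd (f i) (f (i + 1))) ∧
    ∃ i < n, G.solid (f i) (f (i + 1)) ∨ G.dashed (f i) (f (i + 1))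

/-- The non-descendants of `X`. -/
def nd (X : Finset V) : Finset V := Finset.univ.filter fun b => ¬ ∃ a ∈ X, G.descends a b

/-- Connectivity by undirected routes. -/
def uconn : V → V → Prop := Relation.ReflTransGen G.und

/-- The chain component containing `i`. -/
def cc (i : V) : Finset V := Finset.univ.filter fun j => G.uconn i j

/-- The set of chain components of `G`. -/
def ccs : Finset (Finset V) := Finset.univ.image G.cc

/-- The nodes incident to some edge of `G`. -/
def verts : Finset V := Finset.univ.filter fun a => ∃ b, G.adj a b

/-- `π` is a topological ordering of the chain components: it is constant on components and
increases along directed edges. -/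
def IsTopoOrder (π : V → ℕ) : Prop :=
  (∀ a b, G.uconn a b → π a = π b) ∧ ∀ a b, G.solid a b ∨ G.dashed a b → π a < π b

/-- Equation 1: for every topological ordering of the chain components, each component `K`
is independent of the preceding components minus `Pa(K)` given `Pa(K)`. -/
def eq1 (S : Matrix V V ℝ) : Prop :=
  ∀ π : V → ℕ, G.IsTopoOrder π → ∀ i : V,
    gaussCI S (G.cc i) ((Finset.univ.filter fun b => π b < π i) \ G.pa (G.cc i))
      (G.pa (G.cc i))

/-- The regression coefficients `β_K = Σ_{K,Pa(K)} (Σ_{Pa(K),Pa(K)})⁻¹`. -/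
def beta (S : Matrix V V ℝ) (K : Finset V) : Matrix K (G.pa K) ℝ :=
  msub S K (G.pa K) * (msub S (G.pa K) (G.pa K))⁻¹

/-- The conditional covariance matrix `Λ_K`. -/
def lam (S : Matrix V V ℝ) (K : Finset V) : Matrix K K ℝ :=
  msub S K K - msub S K (G.pa K) * (msub S (G.pa K) (G.pa K))⁻¹ * msub S (G.pa K) K

/-- The precision matrix `Ω = (Σ_{K ∪ Pa(K), K ∪ Pa(K)})⁻¹`. -/
def om (S : Matrix V V ℝ) (K : Finset V) : Matrix ↥(K ∪ G.pa K) ↥(K ∪ G.pa K) ℝ :=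
  (msub S (K ∪ G.pa K) (K ∪ G.pa K))⁻¹

/-- Equation 6: `(β_K)_{i,j} = 0` for all `i ∈ K` and `j ∈ Mo(K) ∖ Mo(i)`. -/
def eq6 (S : Matrix V V ℝ) : Prop :=
  ∀ K ∈ G.ccs, ∀ i (hi : i ∈ K), ∀ j (hj : j ∈ G.pa K),
    j ∈ G.mo K → j ∉ G.mo {i} → G.beta S K ⟨i, hi⟩ ⟨j, hj⟩ = 0

/-- Equation 7: `Ω_{i,j} = 0` for all `i ∈ K` and `j ∈ Fa(K) ∖ Fa(i)`. -/
def eq7 (S : Matrix V V ℝ) : Prop :=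
  ∀ K ∈ G.ccs, ∀ i (hi : i ∈ K), ∀ j (hj : j ∈ G.pa K),
    j ∈ G.fa K → j ∉ G.fa {i} →
    G.om S K ⟨i, Finset.mem_union_left _ hi⟩ ⟨j, Finset.mem_union_right _ hj⟩ = 0

/-- Equation 8: `(Λ_K⁻¹)_{i,j} = 0` for all `i ∈ K` and `j ∈ K ∖ ({i} ∪ Ne(i))`. -/
def eq8 (S : Matrix V V ℝ) : Prop :=
  ∀ K ∈ G.ccs, ∀ i (hi : i ∈ K), ∀ j (hj : j ∈ K),
    j ≠ i → j ∉ G.nb {i} → (G.lam S K)⁻¹ ⟨i, hi⟩ ⟨j, hj⟩ = 0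

/-- `p` satisfies Equation 1 and the zero restrictions of Equations 6–8 w.r.t. `G`. -/
def eqs (S : Matrix V V ℝ) : Prop := G.eq1 S ∧ G.eq6 S ∧ G.eq7 S ∧ G.eq8 S

/-- The global Markov property with respect to `G`, for an abstract ternary
(conditional-independence) relation `I`. -/
def globalMP (I : Finset V → Finset V → Finset V → Prop) : Prop :=
  ∀ X Y Z : Finset V, PDisj X Y Z → G.Sep X Y Z → I X Y Z

/-- The block-recursive Markov property (B1)–(B3) with respect to `G`. -/
def blockRecMP (I : Finset V → Finset V → Finset V → Prop) : Prop :=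
  ∀ K ∈ G.ccs, ∀ i ∈ K,
    I {i} (((G.nd K \ K) \ G.fa K) \ G.mo {i}) (G.fa K ∪ G.mo {i}) ∧
    I {i} (((G.nd K \ K) \ G.fa {i}) \ G.mo K) ((K \ {i}) ∪ G.fa {i} ∪ G.mo K) ∧
    ∀ j ∈ K, j ≠ i → j ∉ G.nb {i} → I {i} {j} ((K \ {i, j}) ∪ G.pa K)

/-- The pairwise Markov property (P1)–(P2) with respect to `G`. -/
def pairwiseMP (I : Finset V → Finset V → Finset V → Prop) : Prop :=
  ∀ i j : V, i ≠ j → ¬ G.adj i j → ∀ K ∈ G.ccs, i ∈ K →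
    (j ∈ ((G.nd {i} \ K) \ G.fa K) \ G.mo {i} → I {i} {j} ((G.nd {i} \ K) \ {j})) ∧
    (j ∈ ((G.nd {i} \ {i}) \ G.fa {i}) \ G.mo K → I {i} {j} (G.nd {i} \ {i, j}))

/-- The local Markov property (L1)–(L2) with respect to `G`. -/
def localMP (I : Finset V → Finset V → Finset V → Prop) : Prop :=
  ∀ K ∈ G.ccs, ∀ i ∈ K,
    I {i} (((G.nd {i} \ K) \ G.fa K) \ G.mo {i}) (G.fa K ∪ G.mo {i}) ∧
    I {i} ((((G.nd {i} \ {i}) \ G.pa {i}) \ G.nb {i}) \ G.mo (G.nb {i}))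
      (G.pa {i} ∪ G.nb {i} ∪ G.mo (G.nb {i}))

/-- The subgraph `G^U`: it keeps the edge `A ⊸ B` (with its type and orientation) iff `G`
has a route `A ⊸ B ⊸ ⋯ ⊸ C` with `C ∈ U`, all edges undirected or directed in the
direction of travel, and no subroute `R ⇢ S − T`. -/
def goodFrom (U : Finset V) (a b : V) : Prop :=
  ∃ (f : ℕ → V) (n : ℕ), 1 ≤ n ∧ f 0 = a ∧ f 1 = b ∧ f n ∈ U ∧
    (∀ i < n, G.fwd (f i) (f (i + 1))) ∧
    ∀ i, i + 2 ≤ n → ¬ (G.dashed (f i) (f (i + 1)) ∧ G.und (f (i + 1)) (f (i + 2)))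

/-- The graph `G^U`. -/
def derived (U : Finset V) : PreGraph V where
  undir a b := G.undir a b ∧ G.goodFrom U a b
  solid a b := G.solid a b ∧ G.goodFrom U a b
  dashed a b := G.dashed a b ∧ G.goodFrom U a b

/-- The set `Y'` used in Lemmas 2 and 3:
`Y' = {B' ∈ V(G^{X∪Y∪Z}) ∖ (X ∪ Z) : X ⊥_{G^{X∪Y∪Z}} B' | Z}`. -/
def derivedYp (X Y Z : Finset V) : Finset V :=
  ((G.derived (X ∪ Y ∪ Z)).verts \ (X ∪ Z)).filter fun b =>
    (G.derived (X ∪ Y ∪ Z)).Sep X {b} Z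

/-- The set `X' = V(G^{X∪Y∪Z}) ∖ (Y' ∪ Z)` used in Lemmas 2 and 3. -/
def derivedXp (X Y Z : Finset V) : Finset V :=
  (G.derived (X ∪ Y ∪ Z)).verts \ (G.derivedYp X Y Z ∪ Z)

end Finite

end PreGraph

/-- A chain graph: at most one edge between any pair of distinct nodes (undirected, solid
directed, or dashed directed) and no semidirected cycles. -/
structure ChainGraph (V : Type*) extends PreGraph V where
  undir_symm : ∀ a b, toPreGraph.undir a b → toPreGraph.undir b a
  undir_irrefl : ∀ a, ¬ toPreGraph.undir a a
  solid_irrefl : ∀ a, ¬ toPreGraph.solid a a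
  dashed_irrefl : ∀ a, ¬ toPreGraph.dashed a a
  undir_not_solid : ∀ a b, toPreGraph.undir a b → ¬ toPreGraph.solid a b
  undir_not_dashed : ∀ a b, toPreGraph.undir a b → ¬ toPreGraph.dashed a b
  solid_not_solid : ∀ a b, toPreGraph.solid a b → ¬ toPreGraph.solid b a
  solid_not_dashed : ∀ a b, toPreGraph.solid a b → ¬ toPreGraph.dashed a b
  solid_not_dashed_rev : ∀ a b, toPreGraph.solid a b → ¬ toPreGraph.dashed b a
  dashed_not_dashed : ∀ a b, toPreGraph.dashed a b → ¬ toPreGraph.dashed b a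
  no_semidirected_cycle : ¬ ∃ (f : ℕ → V) (n : ℕ), 1 ≤ n ∧ f n = f 0 ∧
    (toPreGraph.solid (f 0) (f 1) ∨ toPreGraph.dashed (f 0) (f 1)) ∧
    ∀ i < n, toPreGraph.fwd (f i) (f (i + 1))

namespace ChainGraph

variable (G : ChainGraph V)

/-- An LWF chain graph: no dashed directed edges. -/
def IsLWF : Prop := ∀ a b, ¬ G.toPreGraph.dashed a b

/-- An AMP chain graph: no solid directed edges. -/
def IsAMP : Prop := ∀ a b, ¬ G.toPreGraph.solid a b

/-- A unified chain graph: `Fa(K) ∩ Mo(K) = ∅` for every chain component `K`. -/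
def IsUCG [Fintype V] [DecidableEq V] : Prop :=
  ∀ K ∈ G.toPreGraph.ccs, Disjoint (G.toPreGraph.fa K) (G.toPreGraph.mo K)

end ChainGraph


/-- The AMP chain graph obtained from `G` by deleting every solid directed edge. -/
def ChainGraph.dropSolid (G : ChainGraph V) : ChainGraph V where
  undir := G.toPreGraph.undir
  solid _ _ := False
  dashed := G.toPreGraph.dashed
  undir_symm := G.undir_symm
  undir_irrefl := G.undir_irrefl
  solid_irrefl _ h := h
  dashed_irrefl := G.dashed_irrefl
  undir_not_solid _ _ _ h := h
  undir_not_dashed := G.undir_not_dashed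
  solid_not_solid _ _ h := h.elim
  solid_not_dashed _ _ h := h.elim
  solid_not_dashed_rev _ _ h := h.elim
  dashed_not_dashed := G.dashed_not_dashed
  no_semidirected_cycle := fun ⟨f, n, hn, hcyc, hstart, hsteps⟩ =>
    G.no_semidirected_cycle ⟨f, n, hn, hcyc, Or.inr (hstart.resolve_left id),
      fun i hi => (hsteps i hi).imp id (Or.imp False.elim id)⟩

/-- The restriction of `ω : V → ℝ` to the coordinates in `S`. -/
def marg (S : Finset V) : (V → ℝ) → (S → ℝ) := fun ω s => ω s.1

lemma marg_measurable (S : Finset V) : Measurable (marg (V := V) S) :=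
  measurable_pi_lambda _ fun s => measurable_pi_apply s.1

/-- Conditional independence of the coordinate tuples indexed by `X` and `Y` given the
coordinate tuple indexed by `Z`, for a distribution `μ` on `ℝ^V`. -/
def mCI [Fintype V] (μ : Measure (V → ℝ)) [IsFiniteMeasure μ] (X Y Z : Finset V) : Prop :=
  CondIndepFun (MeasurableSpace.comap (marg Z) inferInstance) ((marg_measurable Z).comap_le)
    (marg X) (marg Y) μ

/-- A probability distribution `μ` on `ℝ^V` satisfies the global Markov property with
respect to `G`. -/
def measGlobalMarkov [Fintype V] [DecidableEq V] (G : PreGraph V) (μ : Measure (V → ℝ))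
    [IsFiniteMeasure μ] : Prop :=
  ∀ X Y Z : Finset V, PDisj X Y Z → G.Sep X Y Z → mCI μ X Y Z

/-- A graphoid over `V`: a ternary relation on pairwise disjoint subsets of `V` satisfying
symmetry, decomposition, weak union, contraction and intersection. -/
structure Graphoid (V : Type*) [DecidableEq V] where
  rel : Finset V → Finset V → Finset V → Prop
  symmetry : ∀ X Y Z : Finset V, PDisj X Y Z → rel X Y Z → rel Y X Z
  decomposition : ∀ X Y W Z : Finset V, PDisj4 X Y W Z → rel X (Y ∪ W) Z → rel X Y Z
  weakUnion : ∀ X Y W Z : Finset V, PDisj4 X Y W Z → rel X (Y ∪ W) Z → rel X Y (Z ∪ W)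
  contraction : ∀ X Y W Z : Finset V, PDisj4 X Y W Z →
    rel X Y (Z ∪ W) → rel X W Z → rel X (Y ∪ W) Z
  intersection : ∀ X Y W Z : Finset V, PDisj4 X Y W Z →
    rel X Y (Z ∪ W) → rel X W (Z ∪ Y) → rel X (Y ∪ W) Z

/-- The conditional variance `Σ_{a,a|B} = Σ_{a,a} − Σ_{a,B} (Σ_{B,B})⁻¹ Σ_{B,a}`. -/
def condVar [Fintype V] [DecidableEq V] (S : Matrix V V ℝ) (a : V) (B : Finset V) : ℝ :=
  S a a - ∑ b₁ : B, ∑ b₂ : B, S a b₁.1 * (msub S B B)⁻¹ b₁ b₂ * S b₂.1 a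

section GaussianLinearAlgebra

lemma msub_posDef {S : Matrix V V ℝ} (hS : S.PosDef) (P : Finset V) : (msub S P P).PosDef :=
  hS.submatrix (e := fun i : P => i.1) Subtype.val_injective

lemma sum_subtype_eq_sum [Fintype V] {P : Finset V} (f : V → ℝ) (hf : ∀ j, j ∉ P → f j = 0) :
    ∑ j : P, f j = ∑ j, f j := by
  rw [Finset.sum_coe_sort P f]
  exact Finset.sum_subset (Finset.subset_univ P) fun j _ hj => hf j hj

variable [DecidableEq V]

/-- The regression coefficients solve the normal equations. -/
lemma regression_normal {S : Matrix V V ℝ} (hS : S.PosDef) {X P : Finset V} (x : X) (p : P) :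
    ∑ q : P, (msub S X P * (msub S P P)⁻¹) x q * S q p = S x p := by
  have hu : IsUnit (msub S P P).det :=
    (Matrix.isUnit_iff_isUnit_det _).1 (msub_posDef hS P).isUnit
  have := congrFun (congrFun (Matrix.nonsing_inv_mul_cancel_right (A := msub S P P)
    (msub S X P) hu) x) p
  exact this

variable [Fintype V]

/-- A vector supported on `P` which solves the normal equations is the regression row. -/
lemma regression_eq_of_normal {S : Matrix V V ℝ} (hS : S.PosDef) {X P : Finset V} (x : X)
    (r : V → ℝ) (hr : ∀ q, q ∉ P → r q = 0) (h : ∀ p ∈ P, ∑ q, r q * S q p = S x p) (q : P) :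
    (msub S X P * (msub S P P)⁻¹) x q = r q := by
  have hu : IsUnit (msub S P P).det :=
    (Matrix.isUnit_iff_isUnit_det _).1 (msub_posDef hS P).isUnit
  have key : (fun q : P => r q) ᵥ* msub S P P = fun p => msub S X P x p := by
    funext p
    rw [Matrix.vecMul, dotProduct]
    simp only [msub, of_apply]
    rw [sum_subtype_eq_sum (fun j => r j * S j p) (fun j hj => by simp [hr j hj])]
    exact h p p.2
  have : (fun q : P => r q) = (fun p => msub S X P x p) ᵥ* (msub S P P)⁻¹ := by
    rw [← key, Matrix.vecMul_vecMul, Matrix.mul_nonsing_inv _ hu, Matrix.vecMul_one]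
  exact (congrFun this q).symm

/-- A residual vector for `x` given `Z`, orthogonal to `Y`. -/
lemma gaussCI_iff {S : Matrix V V ℝ} (hS : S.PosDef) {X Y Z : Finset V}
    (hXZ : Disjoint X Z) :
    gaussCI S X Y Z ↔ ∀ x ∈ X, ∃ c : V → ℝ, c x = 1 ∧ (∀ v, v ≠ x → v ∉ Z → c v = 0) ∧
      ∀ w, w ∈ Y ∨ w ∈ Z → ∑ v, c v * S v w = 0 := by
  have split : ∀ x ∈ X, ∀ c : V → ℝ, c x = 1 → (∀ v, v ≠ x → v ∉ Z → c v = 0) → ∀ w,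
      ∑ v, c v * S v w = S x w + ∑ z : Z, c z * S z w := by
    intro x hx c h1 h0 w
    have hxZ : x ∉ Z := Finset.disjoint_left.1 hXZ hx
    rw [Finset.sum_coe_sort Z (fun z => c z * S z w), ← one_mul (S x w), ← h1,
      ← Finset.sum_insert (f := fun z => c z * S z w) hxZ]
    refine (Finset.sum_subset (Finset.subset_univ _) fun v _ hv => ?_).symm
    rw [Finset.mem_insert, not_or] at hv
    rw [h0 v hv.1 hv.2, zero_mul]
  constructor
  · intro h x hx
    set r := (msub S X Z * (msub S Z Z)⁻¹) ⟨x, hx⟩ with hr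
    have hxZ : x ∉ Z := Finset.disjoint_left.1 hXZ hx
    refine ⟨fun v => if v = x then 1 else if hv : v ∈ Z then - r ⟨v, hv⟩ else 0, by simp,
      fun v h1 h2 => by simp [h1, h2], fun w hw => ?_⟩
    rw [split x hx _ (by simp) (fun v h1 h2 => by simp [h1, h2])]
    have : ∀ z : Z, (if z.1 = x then (1 : ℝ) else if hv : z.1 ∈ Z then - r ⟨z.1, hv⟩ else 0) * S z w
        = - (r z * S z w) := by
      intro z
      have : z.1 ≠ x := fun h => hxZ (h ▸ z.2)
      simp [this]
    simp only [this, Finset.sum_neg_distrib]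
    rcases hw with hw | hw
    · have := congrFun (congrFun h ⟨x, hx⟩) ⟨w, hw⟩
      simp only [Matrix.sub_apply, Matrix.zero_apply] at this
      rw [Matrix.mul_apply] at this
      simp only [← hr] at this
      exact this
    · rw [regression_normal hS ⟨x, hx⟩ ⟨w, hw⟩]
      simp
  · intro h
    ext ⟨x, hx⟩ ⟨y, hy⟩
    obtain ⟨c, h1, h0, hc⟩ := h x hx
    have hxZ : x ∉ Z := Finset.disjoint_left.1 hXZ hx
    have hreg := regression_eq_of_normal hS (X := X) (P := Z) ⟨x, hx⟩
      (fun v => if v ∈ Z then - c v else 0) (fun q hq => by simp [hq]) (fun p hp => by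
        have := hc p (Or.inr hp)
        rw [split x hx c h1 h0] at this
        rw [← sum_subtype_eq_sum (P := Z) _ (fun j hj => by simp [hj])]
        simp only [Finset.coe_mem, if_true, neg_mul, Finset.sum_neg_distrib]
        linarith)
    have := hc y (Or.inl hy)
    rw [split x hx c h1 h0] at this
    rw [Matrix.sub_apply, Matrix.mul_apply, Matrix.zero_apply]
    simp only [hreg, Finset.coe_mem, if_true, neg_mul, Finset.sum_neg_distrib]
    simp only [msub, of_apply]
    linarith

/-- Solving `P g = e_x` on `T` with `g` supported on `T`. -/
lemma exists_supported_solution {P : Matrix V V ℝ} (hP : P.PosDef) (T : Finset V) (x : V)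
    (hx : x ∈ T) : ∃ g : V → ℝ, (∀ v, v ∉ T → g v = 0) ∧
      ∀ v ∈ T, (P *ᵥ g) v = if v = x then 1 else 0 := by
  have hu : IsUnit (msub P T T).det :=
    (Matrix.isUnit_iff_isUnit_det _).1 (msub_posDef hP T).isUnit
  refine ⟨fun v => if hv : v ∈ T then (msub P T T)⁻¹ ⟨v, hv⟩ ⟨x, hx⟩ else 0,
    fun v hv => by simp [hv], fun v hv => ?_⟩
  have := congrFun (congrFun (Matrix.mul_nonsing_inv _ hu) ⟨v, hv⟩) ⟨x, hx⟩
  rw [Matrix.mul_apply, Matrix.one_apply] at this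
  rw [Matrix.mulVec, dotProduct,
    ← sum_subtype_eq_sum (P := T) _ (fun j hj => by rw [dif_neg hj, mul_zero])]
  simp only [Subtype.mk.injEq] at this
  rw [← this]
  refine Finset.sum_congr rfl fun j _ => ?_
  simp [msub]

/-- Entries of the inverse of a principal submatrix, read off from a solution vector. -/
lemma inv_msub_entry {S : Matrix V V ℝ} (hS : S.PosDef) (T : Finset V) (i : T) (t : ℝ)
    (w : V → ℝ) (hw : ∀ v, v ∉ T → w v = 0)
    (h : ∀ v ∈ T, ∑ u, w u * S u v = if v = i then t else 0) (j : T) :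
    t * (msub S T T)⁻¹ i j = w j := by
  have hu : IsUnit (msub S T T).det :=
    (Matrix.isUnit_iff_isUnit_det _).1 (msub_posDef hS T).isUnit
  have key : (fun q : T => w q) ᵥ* msub S T T = t • Pi.single i 1 := by
    funext p
    rw [Matrix.vecMul, dotProduct]
    simp only [msub, of_apply]
    rw [sum_subtype_eq_sum (fun j => w j * S j p) (fun j hj => by simp [hw j hj]), h p p.2]
    by_cases hp : p = i
    · simp [hp]
    · simp [hp, Subtype.coe_injective.ne hp]
  have : (fun q : T => w q) = (t • Pi.single i 1) ᵥ* (msub S T T)⁻¹ := by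
    rw [← key, Matrix.vecMul_vecMul, Matrix.mul_nonsing_inv _ hu, Matrix.vecMul_one]
  refine Eq.trans ?_ (congrFun this j).symm
  rw [Matrix.smul_vecMul, Matrix.single_one_vecMul]
  rfl

end GaussianLinearAlgebra

section OpenRoutes

/-- States of a left-to-right traversal of a `Z`-open route. `tail`: start of the route, or the
last edge has a tail at the current node. `dashOut`, `dashIn`: the last edge is a dashed arrow into
the current node, which is outside, respectively inside `Z`. `undOut`: the current section is not
entered by a solid arrow and the current node is outside `Z`. `solidOut`: the current section is
entered by a solid arrow and avoids `Z`. `mustCollide`: the current node lies in `Z` and has to be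
left against a dashed arrow. `section0`, `section1`: the current section is entered by a solid arrow
and has to be left against a solid arrow; it is known to meet `Z` in the second case. -/
inductive TravState
  | tail | dashOut | dashIn | undOut | solidOut | mustCollide | section0 | section1

/-- The states in which the route may be stopped. -/
def TravState.IsOpen : TravState → Prop
  | .tail | .dashOut | .undOut | .solidOut => True
  | _ => False

namespace PreGraph

variable {H : PreGraph V}

lemma und_symm {a b : V} (h : H.und a b) : H.und b a := h.symm

/-- Nodes reachable from `X` by a partial `Z`-open route, together with the traversal state. -/
inductive Trav (H : PreGraph V) (X Z : Finset V) : TravState → V → Prop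
  | start {x} : x ∈ X → x ∉ Z → Trav H X Z .tail x
  | solidOut {s v w} : s.IsOpen → Trav H X Z s v → H.solid v w → w ∉ Z → Trav H X Z .solidOut w
  | solidIn {s v w} : s.IsOpen → Trav H X Z s v → H.solid v w → w ∈ Z → Trav H X Z .mustCollide w
  | solidSection {s v w} : s.IsOpen → Trav H X Z s v → H.solid v w → Trav H X Z .section0 w
  | dashOut {s v w} : s.IsOpen → Trav H X Z s v → H.dashed v w → w ∉ Z → Trav H X Z .dashOut w
  | dashIn {s v w} : s.IsOpen → Trav H X Z s v → H.dashed v w → w ∈ Z → Trav H X Z .dashIn w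
  | tailUnd {v w} : Trav H X Z .tail v → H.und v w → w ∉ Z → Trav H X Z .undOut w
  | undUnd {v w} : Trav H X Z .undOut v → H.und v w → w ∉ Z → Trav H X Z .undOut w
  | dashUnd {v w} : Trav H X Z .dashIn v → H.und v w → w ∉ Z → Trav H X Z .undOut w
  | solidUnd {v w} : Trav H X Z .solidOut v → H.und v w → w ∉ Z → Trav H X Z .solidOut w
  | tailCollide {v w} : Trav H X Z .tail v → H.und v w → w ∈ Z → Trav H X Z .mustCollide w
  | undCollide {v w} : Trav H X Z .undOut v → H.und v w → w ∈ Z → Trav H X Z .mustCollide w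
  | dashCollide {v w} : Trav H X Z .dashIn v → H.und v w → w ∈ Z → Trav H X Z .mustCollide w
  | solidCollide {v w} : Trav H X Z .solidOut v → H.und v w → w ∈ Z → Trav H X Z .mustCollide w
  | sectionUnd {v w} : Trav H X Z .section0 v → H.und v w → Trav H X Z .section0 w
  | sectionMeet {v} : Trav H X Z .section0 v → v ∈ Z → Trav H X Z .section1 v
  | sectionUnd1 {v w} : Trav H X Z .section1 v → H.und v w → Trav H X Z .section1 w
  | tailSolid {v f} : Trav H X Z .tail v → H.solid f v → f ∉ Z → Trav H X Z .tail f
  | tailDash {v f} : Trav H X Z .tail v → H.dashed f v → f ∉ Z → Trav H X Z .tail f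
  | undSolid {v f} : Trav H X Z .undOut v → H.solid f v → f ∉ Z → Trav H X Z .tail f
  | dashSolid {v f} : Trav H X Z .dashIn v → H.solid f v → f ∉ Z → Trav H X Z .tail f
  | dashDash {v f} : Trav H X Z .dashIn v → H.dashed f v → f ∉ Z → Trav H X Z .tail f
  | collideDash {v f} : Trav H X Z .mustCollide v → H.dashed f v → f ∉ Z → Trav H X Z .tail f
  | sectionSolid {v f} : Trav H X Z .section1 v → H.solid f v → f ∉ Z → Trav H X Z .tail f

namespace Route

/-- Append a node to a route. -/
def snoc (ρ : H.Route) (w : V) (h : H.adj (ρ.nodes ρ.len) w) : H.Route where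
  len := ρ.len + 1
  nodes i := if i ≤ ρ.len then ρ.nodes i else w
  adj_step i hi := by
    rcases Nat.lt_succ_iff_lt_or_eq.1 hi with h1 | h1
    · simpa [h1.le, Nat.succ_le_of_lt h1] using ρ.adj_step i h1
    · simpa [h1] using h

lemma snoc_nodes_le (ρ : H.Route) (w : V) (h : H.adj (ρ.nodes ρ.len) w) {i : ℕ}
    (hi : i ≤ ρ.len) : (ρ.snoc w h).nodes i = ρ.nodes i := if_pos hi

lemma snoc_nodes_last (ρ : H.Route) (w : V) (h : H.adj (ρ.nodes ρ.len) w) :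
    (ρ.snoc w h).nodes (ρ.len + 1) = w := if_neg (by omega)

/-- All conditions of `Z`-openness that concern the positions before the end of the route, where
nodes from position `t` on are exempt from the non-collider condition. -/
def OpenUpTo (ρ : H.Route) (Z : Finset V) (t : ℕ) : Prop :=
  (∀ k, ρ.colliderNodeAt k → ρ.nodes k ∈ Z) ∧
  (∀ p q, ρ.colliderSectionOcc p q → ∃ m, p ≤ m ∧ m ≤ q ∧ ρ.nodes m ∈ Z) ∧
  (∀ k < t, ¬ ρ.colliderNodeAt k → ¬ ρ.inColliderSectionAt k → ρ.nodes k ∉ Z)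

/-- The last section of the route is entered by a solid arrow and starts at position `p`. -/
def Pending (ρ : H.Route) (p : ℕ) : Prop :=
  1 ≤ p ∧ p ≤ ρ.len ∧ (∀ m, p ≤ m → m < ρ.len → H.und (ρ.nodes m) (ρ.nodes (m + 1))) ∧
    H.solid (ρ.nodes (p - 1)) (ρ.nodes p)

lemma isZOpen_of_openUpTo {ρ : H.Route} {Z : Finset V} (h : ρ.OpenUpTo Z ρ.len)
    (hl : ρ.nodes ρ.len ∉ Z) : ρ.IsZOpen Z := by
  refine ⟨h.1, h.2.1, fun k hk h1 h2 => ?_⟩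
  rcases hk.lt_or_eq with hk | rfl
  · exact h.2.2 k hk h1 h2
  · exact hl

lemma snoc_colliderNodeAt (ρ : H.Route) (w : V) (h : H.adj (ρ.nodes ρ.len) w) (k : ℕ) :
    (ρ.snoc w h).colliderNodeAt k ↔ ρ.colliderNodeAt k ∨
      (1 ≤ k ∧ k = ρ.len ∧ H.colliderTriple (ρ.nodes (k - 1)) (ρ.nodes k) w) := by
  unfold colliderNodeAt
  constructor
  · rintro ⟨h1, h2, h3⟩
    have h2' : k ≤ ρ.len := Nat.lt_succ_iff.1 h2
    rw [snoc_nodes_le _ _ _ (by omega), snoc_nodes_le _ _ _ h2'] at h3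
    rcases h2'.lt_or_eq with h4 | h4
    · rw [snoc_nodes_le _ _ _ h4] at h3
      exact Or.inl ⟨h1, h4, h3⟩
    · subst h4
      rw [snoc_nodes_last] at h3
      exact Or.inr ⟨h1, rfl, h3⟩
  · rintro (⟨h1, h2, h3⟩ | ⟨h1, rfl, h3⟩)
    · refine ⟨h1, Nat.lt_succ_of_lt h2, ?_⟩
      rwa [snoc_nodes_le _ _ _ (by omega), snoc_nodes_le _ _ _ h2.le, snoc_nodes_le _ _ _ h2]
    · refine ⟨h1, Nat.lt_succ_self _, ?_⟩
      rwa [snoc_nodes_le _ _ _ (by omega), snoc_nodes_le _ _ _ le_rfl, snoc_nodes_last]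

lemma snoc_colliderSectionOcc (ρ : H.Route) (w : V) (h : H.adj (ρ.nodes ρ.len) w) (p q : ℕ) :
    (ρ.snoc w h).colliderSectionOcc p q ↔ ρ.colliderSectionOcc p q ∨
      (q = ρ.len ∧ ρ.Pending p ∧ H.solid w (ρ.nodes ρ.len)) := by
  unfold colliderSectionOcc Pending
  constructor
  · rintro ⟨h1, h2, h3, h4, h5, h6⟩
    have h3' : q ≤ ρ.len := Nat.succ_le_succ_iff.1 h3
    have h4' : ∀ m, p ≤ m → m < q → H.und (ρ.nodes m) (ρ.nodes (m + 1)) := by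
      intro m hm hmq
      have := h4 m hm hmq
      rwa [snoc_nodes_le _ _ _ (by omega), snoc_nodes_le _ _ _ (by omega)] at this
    rw [snoc_nodes_le _ _ _ (by omega), snoc_nodes_le _ _ _ (by omega)] at h5
    rw [snoc_nodes_le _ _ _ h3'] at h6
    rcases h3'.lt_or_eq with h7 | h7
    · rw [snoc_nodes_le _ _ _ h7] at h6
      exact Or.inl ⟨h1, h2, h7, h4', h5, h6⟩
    · subst h7
      rw [snoc_nodes_last] at h6
      exact Or.inr ⟨rfl, ⟨h1, h2, h4', h5⟩, h6⟩
  · rintro (⟨h1, h2, h3, h4, h5, h6⟩ | ⟨rfl, ⟨h1, h2, h4, h5⟩, h6⟩)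
    · refine ⟨h1, h2, Nat.le_succ_of_le h3, fun m hm hmq => ?_, ?_, ?_⟩
      · rw [snoc_nodes_le _ _ _ (by omega), snoc_nodes_le _ _ _ (by omega)]
        exact h4 m hm hmq
      · rwa [snoc_nodes_le _ _ _ (by omega), snoc_nodes_le _ _ _ (by omega)]
      · rwa [snoc_nodes_le _ _ _ h3, snoc_nodes_le _ _ _ (by omega)]
    · refine ⟨h1, h2, le_rfl, fun m hm hmq => ?_, ?_, ?_⟩
      · rw [snoc_nodes_le _ _ _ (by omega), snoc_nodes_le _ _ _ (by omega)]
        exact h4 m hm hmq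
      · rwa [snoc_nodes_le _ _ _ (by omega), snoc_nodes_le _ _ _ (by omega)]
      · rwa [snoc_nodes_last, snoc_nodes_le _ _ _ le_rfl]

lemma snoc_pending (ρ : H.Route) (w : V) (h : H.adj (ρ.nodes ρ.len) w) (p : ℕ) :
    (ρ.snoc w h).Pending p ↔ (ρ.Pending p ∧ H.und (ρ.nodes ρ.len) w) ∨
      (p = ρ.len + 1 ∧ H.solid (ρ.nodes ρ.len) w) := by
  unfold Pending
  constructor
  · rintro ⟨h1, h2, h3, h4⟩
    rcases (show p ≤ ρ.len + 1 from h2).lt_or_eq with h5 | rfl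
    · refine Or.inl ⟨⟨h1, by omega, fun m hm hml => ?_, ?_⟩, ?_⟩
      · have := h3 m hm (Nat.lt_succ_of_lt hml)
        rwa [snoc_nodes_le _ _ _ (by omega), snoc_nodes_le _ _ _ (by omega)] at this
      · rwa [snoc_nodes_le _ _ _ (by omega), snoc_nodes_le _ _ _ (by omega)] at h4
      · have := h3 ρ.len (by omega) (Nat.lt_succ_self _)
        rwa [snoc_nodes_le _ _ _ le_rfl, snoc_nodes_last] at this
    · rw [snoc_nodes_le _ _ _ (by omega), snoc_nodes_last] at h4
      exact Or.inr ⟨rfl, h4⟩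
  · rintro (⟨⟨h1, h2, h3, h4⟩, h5⟩ | ⟨rfl, h4⟩)
    · refine ⟨h1, Nat.le_succ_of_le h2, fun m hm hml => ?_, ?_⟩
      · rcases Nat.lt_succ_iff_lt_or_eq.1 hml with h6 | rfl
        · rw [snoc_nodes_le _ _ _ (by omega), snoc_nodes_le _ _ _ (by omega)]
          exact h3 m hm h6
        · rwa [snoc_nodes_le _ _ _ le_rfl, snoc_nodes_last]
      · rwa [snoc_nodes_le _ _ _ (by omega), snoc_nodes_le _ _ _ (by omega)]
    · refine ⟨by omega, le_rfl, fun m hm hml => absurd hml ?_, ?_⟩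
      · show ¬ m < ρ.len + 1
        omega
      · rwa [snoc_nodes_le _ _ _ (by omega), snoc_nodes_last]

lemma snoc_openUpTo {ρ : H.Route} {Z : Finset V} {t t' : ℕ} (hρ : ρ.OpenUpTo Z t) (w : V)
    (h : H.adj (ρ.nodes ρ.len) w) (ht' : t' ≤ ρ.len + 1)
    (hcol : 1 ≤ ρ.len → H.colliderTriple (ρ.nodes (ρ.len - 1)) (ρ.nodes ρ.len) w →
      ρ.nodes ρ.len ∈ Z)
    (hsec : ∀ p, ρ.Pending p → H.solid w (ρ.nodes ρ.len) → ∃ m, p ≤ m ∧ m ≤ ρ.len ∧ ρ.nodes m ∈ Z)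
    (hnon : ∀ k, t ≤ k → k < t' → ρ.nodes k ∈ Z →
      (ρ.snoc w h).colliderNodeAt k ∨ (ρ.snoc w h).inColliderSectionAt k) :
    (ρ.snoc w h).OpenUpTo Z t' := by
  refine ⟨fun k hk => ?_, fun p q hpq => ?_, fun k hk h1 h2 => ?_⟩
  · rcases (snoc_colliderNodeAt ρ w h k).1 hk with hk' | ⟨h1, rfl, h2⟩
    · rw [snoc_nodes_le _ _ _ hk'.2.1.le]
      exact hρ.1 k hk'
    · rw [snoc_nodes_le _ _ _ le_rfl]
      exact hcol h1 h2
  · rcases (snoc_colliderSectionOcc ρ w h p q).1 hpq with hpq' | ⟨rfl, h1, h2⟩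
    · obtain ⟨m, hm, hmq, hmZ⟩ := hρ.2.1 p q hpq'
      refine ⟨m, hm, hmq, ?_⟩
      have := hpq'.2.2.1
      rwa [snoc_nodes_le _ _ _ (by omega)]
    · obtain ⟨m, hm, hmq, hmZ⟩ := hsec p h1 h2
      exact ⟨m, hm, hmq, by rwa [snoc_nodes_le _ _ _ hmq]⟩
  · rw [snoc_nodes_le _ _ _ (by omega)]
    rcases lt_or_ge k t with hkt | hkt
    · refine hρ.2.2 k hkt (fun hc => h1 ?_) (fun hs => h2 ?_)
      · exact (snoc_colliderNodeAt ρ w h k).2 (Or.inl hc)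
      · obtain ⟨p, q, hpq, hp, hq⟩ := hs
        exact ⟨p, q, (snoc_colliderSectionOcc ρ w h p q).2 (Or.inl hpq), hp, hq⟩
    · intro hZ
      rcases hnon k hkt hk hZ with hc | hs
      · exact h1 hc
      · exact h2 hs

/-- The last edge of the route satisfies `E`. -/
def LastEdge (ρ : H.Route) (E : V → V → Prop) : Prop :=
  1 ≤ ρ.len ∧ E (ρ.nodes (ρ.len - 1)) (ρ.nodes ρ.len)

lemma snoc_lastEdge (ρ : H.Route) (w : V) (h : H.adj (ρ.nodes ρ.len) w) (E : V → V → Prop) :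
    (ρ.snoc w h).LastEdge E ↔ E (ρ.nodes ρ.len) w := by
  unfold LastEdge
  show 1 ≤ ρ.len + 1 ∧ E ((ρ.snoc w h).nodes (ρ.len + 1 - 1)) ((ρ.snoc w h).nodes (ρ.len + 1)) ↔ _
  rw [snoc_nodes_last, snoc_nodes_le _ _ _ (by omega), Nat.add_sub_cancel]
  simp

/-- The invariant attached to a traversal state. -/
def TravInv (ρ : H.Route) (Z : Finset V) : TravState → Prop
  | .tail => ρ.OpenUpTo Z ρ.len ∧ ρ.nodes ρ.len ∉ Z ∧
      (ρ.len = 0 ∨ ρ.LastEdge fun a b => H.solid b a ∨ H.dashed b a)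
  | .dashOut => ρ.OpenUpTo Z ρ.len ∧ ρ.nodes ρ.len ∉ Z
  | .dashIn => ρ.OpenUpTo Z ρ.len ∧ ρ.nodes ρ.len ∈ Z ∧ ρ.LastEdge H.dashed
  | .undOut => ρ.OpenUpTo Z ρ.len ∧ ρ.nodes ρ.len ∉ Z ∧ ρ.LastEdge H.und ∧ ∀ p, ¬ ρ.Pending p
  | .solidOut => ρ.OpenUpTo Z ρ.len ∧ ρ.nodes ρ.len ∉ Z ∧
      ρ.LastEdge fun a b => H.und a b ∨ H.solid a b
  | .mustCollide => ρ.OpenUpTo Z ρ.len ∧ ρ.nodes ρ.len ∈ Z ∧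
      ρ.LastEdge fun a b => H.und a b ∨ H.solid a b
  | .section0 => ∃ p, ρ.Pending p ∧ ρ.OpenUpTo Z p
  | .section1 => ∃ p, ρ.Pending p ∧ ρ.OpenUpTo Z p ∧ ∃ m, p ≤ m ∧ m ≤ ρ.len ∧ ρ.nodes m ∈ Z

end Route

end PreGraph

end OpenRoutes

section Soundness

open PreGraph

namespace ChainGraph

variable (G : ChainGraph V) {a b c : V}

lemma not_solid_of_und (h : G.und a b) : ¬ G.solid a b ∧ ¬ G.solid b a := by
  have h1 : G.undir a b := h.elim id (G.undir_symm _ _)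
  exact ⟨G.undir_not_solid _ _ h1, G.undir_not_solid _ _ (G.undir_symm _ _ h1)⟩

lemma not_dashed_of_und (h : G.und a b) : ¬ G.dashed a b ∧ ¬ G.dashed b a := by
  have h1 : G.undir a b := h.elim id (G.undir_symm _ _)
  exact ⟨G.undir_not_dashed _ _ h1, G.undir_not_dashed _ _ (G.undir_symm _ _ h1)⟩

lemma not_colliderTriple_right (h : G.solid c b ∨ G.dashed c b) : ¬ G.colliderTriple a c b := by
  have h1 := G.solid_not_solid c b
  have h2 := G.dashed_not_dashed c b
  have h3 := G.solid_not_dashed_rev c b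
  have h4 := G.solid_not_dashed_rev b c
  have h5 := G.not_solid_of_und (a := c) (b := b)
  have h6 := G.not_dashed_of_und (a := c) (b := b)
  unfold colliderTriple
  tauto

lemma not_colliderTriple_left (h : G.solid c a ∨ G.dashed c a) : ¬ G.colliderTriple a c b := by
  have h1 := G.solid_not_solid c a
  have h2 := G.dashed_not_dashed c a
  have h3 := G.solid_not_dashed_rev c a
  have h4 := G.solid_not_dashed_rev a c
  have h5 := G.not_solid_of_und (a := a) (b := c)
  have h6 := G.not_dashed_of_und (a := a) (b := c)
  unfold colliderTriple
  tauto

lemma not_colliderTriple_of_not_dashed (h1 : G.und a c ∨ G.solid a c)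
    (h2 : G.und c b ∨ G.solid b c) : ¬ G.colliderTriple a c b := by
  have h3 := G.solid_not_dashed a c
  have h4 := G.not_dashed_of_und (a := a) (b := c)
  have h5 := G.solid_not_dashed b c
  have h6 := G.not_dashed_of_und (a := c) (b := b)
  unfold colliderTriple
  tauto

variable {G}

lemma not_pending_of_lastEdge {ρ : G.Route} {E : V → V → Prop} (h : ρ.LastEdge E)
    (hE : ∀ a b, E a b → ¬ G.und a b ∧ ¬ G.solid a b) (p : ℕ) : ¬ ρ.Pending p := by
  rintro ⟨h1, h2, h3, h4⟩
  have h5 := hE _ _ h.2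
  rcases h2.lt_or_eq with h6 | h6
  · have := h3 (ρ.len - 1) (by omega) (by omega)
    rw [Nat.sub_add_cancel h.1] at this
    exact h5.1 this
  · subst h6
    exact h5.2 h4

lemma lastEdge_of_pending {ρ : G.Route} {p : ℕ} (h : ρ.Pending p) :
    ρ.LastEdge fun a b => G.und a b ∨ G.solid a b := by
  obtain ⟨h1, h2, h3, h4⟩ := h
  refine ⟨by omega, ?_⟩
  rcases h2.lt_or_eq with h6 | h6
  · have := h3 (ρ.len - 1) (by omega) (by omega)
    rw [Nat.sub_add_cancel (by omega)] at this
    exact Or.inl this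
  · subst h6
    exact Or.inr h4

lemma pending_le {ρ : G.Route} {p p' : ℕ} (h : ρ.Pending p) (h' : ρ.Pending p') : p' ≤ p := by
  by_contra hlt
  have := h.2.2.1 (p' - 1) (by omega) (by have := h'.1; have := h'.2.1; omega)
  rw [Nat.sub_add_cancel h'.1] at this
  exact (G.not_solid_of_und this).1 h'.2.2.2

lemma not_pending_of_tail {ρ : G.Route}
    (h : ρ.len = 0 ∨ ρ.LastEdge fun a b => G.solid b a ∨ G.dashed b a) (p : ℕ) :
    ¬ ρ.Pending p := by
  rcases h with h | h
  · rintro ⟨h1, h2, -⟩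
    omega
  · refine not_pending_of_lastEdge h (fun a b hab => ?_) p
    have h1 := G.solid_not_solid b a
    have h2 := G.solid_not_dashed_rev a b
    have h5 := G.not_solid_of_und (a := a) (b := b)
    have h6 := G.not_dashed_of_und (a := a) (b := b)
    tauto

lemma openUpTo_snoc {ρ : G.Route} {Z : Finset V} (hρ : ρ.OpenUpTo Z ρ.len) (w : V)
    (h : G.adj (ρ.nodes ρ.len) w)
    (hcol : 1 ≤ ρ.len → G.colliderTriple (ρ.nodes (ρ.len - 1)) (ρ.nodes ρ.len) w →
      ρ.nodes ρ.len ∈ Z)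
    (hsec : ∀ p, ρ.Pending p → G.solid w (ρ.nodes ρ.len) → ∃ m, p ≤ m ∧ m ≤ ρ.len ∧ ρ.nodes m ∈ Z)
    (hnon : ρ.nodes ρ.len ∈ Z → ρ.LastEdge fun a b => G.colliderTriple a b w) :
    (ρ.snoc w h).OpenUpTo Z (ρ.len + 1) := by
  refine Route.snoc_openUpTo hρ w h le_rfl hcol hsec fun k h1 h2 hZ => ?_
  obtain rfl : k = ρ.len := by omega
  obtain ⟨h3, h4⟩ := hnon hZ
  exact Or.inl ((Route.snoc_colliderNodeAt ρ w h _).2 (Or.inr ⟨h3, rfl, h4⟩))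

lemma openUpTo_of_isOpen {ρ : G.Route} {Z : Finset V} {s : TravState} (hs : s.IsOpen)
    (h : ρ.TravInv Z s) : ρ.OpenUpTo Z ρ.len ∧ ρ.nodes ρ.len ∉ Z := by
  cases s <;> simp only [TravState.IsOpen] at hs
  exacts [⟨h.1, h.2.1⟩, h, ⟨h.1, h.2.1⟩, ⟨h.1, h.2.1⟩]

lemma openUpTo_snoc_out {ρ : G.Route} {Z : Finset V} (hρ : ρ.OpenUpTo Z ρ.len)
    (hZ : ρ.nodes ρ.len ∉ Z) {w : V} (he : G.solid (ρ.nodes ρ.len) w ∨ G.dashed (ρ.nodes ρ.len) w)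
    (h : G.adj (ρ.nodes ρ.len) w) : (ρ.snoc w h).OpenUpTo Z (ρ.len + 1) := by
  refine openUpTo_snoc hρ w h (fun _ hc => absurd hc (G.not_colliderTriple_right he))
    (fun p _ hs => ?_) (fun h => absurd h hZ)
  have h1 := G.solid_not_solid _ _ hs
  have h2 := G.solid_not_dashed_rev _ _ hs
  tauto

lemma openUpTo_snoc_und {ρ : G.Route} {Z : Finset V} (hρ : ρ.OpenUpTo Z ρ.len)
    {w : V} (he : G.und (ρ.nodes ρ.len) w) (h : G.adj (ρ.nodes ρ.len) w)
    (hZ : ρ.nodes ρ.len ∉ Z → ρ.len = 0 ∨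
      ρ.LastEdge fun a b => (G.und a b ∨ G.solid a b) ∨ G.solid b a ∨ G.dashed b a)
    (hZ' : ρ.nodes ρ.len ∈ Z → ρ.LastEdge G.dashed) :
    (ρ.snoc w h).OpenUpTo Z (ρ.len + 1) := by
  refine openUpTo_snoc hρ w h (fun h1 hc => ?_) (fun p _ hs => ?_) (fun h => ?_)
  · by_contra hn
    rcases hZ hn with h2 | ⟨-, h2 | h2⟩
    · omega
    · exact G.not_colliderTriple_of_not_dashed h2 (Or.inl he) hc
    · exact G.not_colliderTriple_left h2 hc
  · exact absurd hs (G.not_solid_of_und he).2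
  · obtain ⟨h1, h2⟩ := hZ' h
    exact ⟨h1, Or.inr (Or.inl ⟨h2, he⟩)⟩

lemma openUpTo_snoc_collide {ρ : G.Route} {Z : Finset V} (hρ : ρ.OpenUpTo Z ρ.len)
    {w : V} (hZ : ρ.nodes ρ.len ∈ Z) (h : G.adj (ρ.nodes ρ.len) w)
    (hc : ρ.LastEdge fun a b => G.colliderTriple a b w) :
    (ρ.snoc w h).OpenUpTo Z (ρ.len + 1) :=
  openUpTo_snoc hρ w h (fun _ _ => hZ) (fun _ hp _ => ⟨_, hp.2.1, le_rfl, hZ⟩) (fun _ => hc)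

lemma openUpTo_snoc_section {ρ : G.Route} {Z : Finset V} {p : ℕ} (hp : ρ.Pending p)
    (hρ : ρ.OpenUpTo Z p) {w : V} (he : G.und (ρ.nodes ρ.len) w) (h : G.adj (ρ.nodes ρ.len) w) :
    (ρ.snoc w h).OpenUpTo Z p :=
  Route.snoc_openUpTo hρ w h (by have := hp.2.1; omega)
    (fun _ hc => absurd hc
      (G.not_colliderTriple_of_not_dashed (lastEdge_of_pending hp).2 (Or.inl he)))
    (fun _ _ hs => absurd hs (G.not_solid_of_und he).2) (fun k h1 h2 => by omega)

lemma openUpTo_snoc_section_end {ρ : G.Route} {Z : Finset V} {p m : ℕ} (hp : ρ.Pending p)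
    (hρ : ρ.OpenUpTo Z p) {w : V} (he : G.solid w (ρ.nodes ρ.len)) (h : G.adj (ρ.nodes ρ.len) w)
    (hpm : p ≤ m) (hm : m ≤ ρ.len) (hZ : ρ.nodes m ∈ Z) :
    (ρ.snoc w h).OpenUpTo Z (ρ.len + 1) :=
  Route.snoc_openUpTo hρ w h le_rfl
    (fun _ hc => absurd hc
      (G.not_colliderTriple_of_not_dashed (lastEdge_of_pending hp).2 (Or.inr he)))
    (fun _ hp' _ => ⟨m, (pending_le hp hp').trans hpm, hm, hZ⟩)
    (fun k h1 h2 _ => Or.inr ⟨p, ρ.len, (Route.snoc_colliderSectionOcc ρ w h p _).2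
      (Or.inr ⟨rfl, hp, he⟩), h1, by omega⟩)

/-- Every traversal is realized by a route. -/
lemma exists_route_of_trav {X Z : Finset V} {s : TravState} {v : V}
    (h : Trav G.toPreGraph X Z s v) :
    ∃ ρ : G.Route, ρ.nodes 0 ∈ X ∧ ρ.nodes ρ.len = v ∧ ρ.TravInv Z s := by
  have undAdj : ∀ {a b}, G.und a b → G.adj a b := fun h => Or.inl h
  have solidAdj : ∀ {a b}, G.solid a b → G.adj a b := fun h => Or.inr (Or.inl h)
  have solidAdj' : ∀ {a b}, G.solid b a → G.adj a b := fun h => Or.inr (Or.inr (Or.inl h))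
  have dashAdj : ∀ {a b}, G.dashed a b → G.adj a b := fun h => Or.inr (Or.inr (Or.inr (Or.inl h)))
  have dashAdj' : ∀ {a b}, G.dashed b a → G.adj a b := fun h => Or.inr (Or.inr (Or.inr (Or.inr h)))
  -- extending a realized route by one edge
  have ext : ∀ {s' : TravState} {w : V} (ρ : G.Route) (hadj : G.adj (ρ.nodes ρ.len) w),
      ρ.nodes 0 ∈ X → (ρ.snoc w hadj).TravInv Z s' →
      ∃ ρ : G.Route, ρ.nodes 0 ∈ X ∧ ρ.nodes ρ.len = w ∧ ρ.TravInv Z s' := fun ρ hadj h0 hinv =>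
    ⟨ρ.snoc _ hadj, by rwa [Route.snoc_nodes_le _ _ _ (Nat.zero_le _)],
      Route.snoc_nodes_last _ _ _, hinv⟩
  have last : ∀ {w : V} (ρ : G.Route) (hadj : G.adj (ρ.nodes ρ.len) w),
      (ρ.snoc w hadj).nodes (ρ.snoc w hadj).len = w := fun ρ hadj =>
    Route.snoc_nodes_last _ _ _
  induction h with
  | @start x hx hxZ =>
    refine ⟨⟨0, fun _ => x, fun i hi => absurd hi (Nat.not_lt_zero i)⟩, hx, rfl,
      ⟨fun k hk => absurd hk.2.1 (Nat.not_lt_zero _), fun p q hpq => ?_,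
        fun k hk => absurd hk (Nat.not_lt_zero _)⟩, hxZ, Or.inl rfl⟩
    exact absurd hpq.2.2.1 (Nat.not_succ_le_zero _)
  | solidOut hs _ he hw ih =>
    obtain ⟨ρ, h0, rfl, hinv⟩ := ih
    obtain ⟨h1, h2⟩ := openUpTo_of_isOpen hs hinv
    refine ext ρ (solidAdj he) h0 ⟨openUpTo_snoc_out h1 h2 (Or.inl he) _, by rwa [last], ?_⟩
    exact (Route.snoc_lastEdge _ _ _ _).2 (Or.inr he)
  | solidIn hs _ he hw ih =>
    obtain ⟨ρ, h0, rfl, hinv⟩ := ih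
    obtain ⟨h1, h2⟩ := openUpTo_of_isOpen hs hinv
    refine ext ρ (solidAdj he) h0 ⟨openUpTo_snoc_out h1 h2 (Or.inl he) _, by rwa [last], ?_⟩
    exact (Route.snoc_lastEdge _ _ _ _).2 (Or.inr he)
  | solidSection hs _ he ih =>
    obtain ⟨ρ, h0, rfl, hinv⟩ := ih
    obtain ⟨h1, h2⟩ := openUpTo_of_isOpen hs hinv
    exact ext ρ (solidAdj he) h0 ⟨ρ.len + 1, (Route.snoc_pending _ _ _ _).2 (Or.inr ⟨rfl, he⟩),
      openUpTo_snoc_out h1 h2 (Or.inl he) _⟩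
  | dashOut hs _ he hw ih =>
    obtain ⟨ρ, h0, rfl, hinv⟩ := ih
    obtain ⟨h1, h2⟩ := openUpTo_of_isOpen hs hinv
    exact ext ρ (dashAdj he) h0 ⟨openUpTo_snoc_out h1 h2 (Or.inr he) _, by rwa [last]⟩
  | dashIn hs _ he hw ih =>
    obtain ⟨ρ, h0, rfl, hinv⟩ := ih
    obtain ⟨h1, h2⟩ := openUpTo_of_isOpen hs hinv
    refine ext ρ (dashAdj he) h0 ⟨openUpTo_snoc_out h1 h2 (Or.inr he) _, by rwa [last], ?_⟩
    exact (Route.snoc_lastEdge _ _ _ _).2 he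
  | tailUnd _ he hw ih =>
    obtain ⟨ρ, h0, rfl, h1, h2, h3⟩ := ih
    refine ext ρ (undAdj he) h0 ⟨openUpTo_snoc_und h1 he _
      (fun _ => h3.imp_right fun h => ⟨h.1, Or.inr h.2⟩) (fun h => absurd h h2), by rwa [last],
      (Route.snoc_lastEdge _ _ _ _).2 he, fun p hp => ?_⟩
    rcases (Route.snoc_pending _ _ _ _).1 hp with ⟨hp, -⟩ | ⟨-, hs⟩
    · exact not_pending_of_tail h3 p hp
    · exact (G.not_solid_of_und he).1 hs
  | undUnd _ he hw ih =>
    obtain ⟨ρ, h0, rfl, h1, h2, h3, h4⟩ := ih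
    refine ext ρ (undAdj he) h0 ⟨openUpTo_snoc_und h1 he _
      (fun _ => Or.inr ⟨h3.1, Or.inl (Or.inl h3.2)⟩) (fun h => absurd h h2), by rwa [last],
      (Route.snoc_lastEdge _ _ _ _).2 he, fun p hp => ?_⟩
    rcases (Route.snoc_pending _ _ _ _).1 hp with ⟨hp, -⟩ | ⟨-, hs⟩
    · exact h4 p hp
    · exact (G.not_solid_of_und he).1 hs
  | dashUnd _ he hw ih =>
    obtain ⟨ρ, h0, rfl, h1, h2, h3⟩ := ih
    refine ext ρ (undAdj he) h0 ⟨openUpTo_snoc_und h1 he _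
      (fun h => absurd h2 h) (fun _ => h3), by rwa [last],
      (Route.snoc_lastEdge _ _ _ _).2 he, fun p hp => ?_⟩
    rcases (Route.snoc_pending _ _ _ _).1 hp with ⟨hp, -⟩ | ⟨-, hs⟩
    · exact not_pending_of_lastEdge h3 (fun a b hab =>
        ⟨fun h => (G.not_dashed_of_und h).1 hab, fun h => G.solid_not_dashed _ _ h hab⟩) p hp
    · exact (G.not_solid_of_und he).1 hs
  | solidUnd _ he hw ih =>
    obtain ⟨ρ, h0, rfl, h1, h2, h3⟩ := ih
    exact ext ρ (undAdj he) h0 ⟨openUpTo_snoc_und h1 he _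
      (fun _ => Or.inr ⟨h3.1, Or.inl h3.2⟩) (fun h => absurd h h2), by rwa [last],
      (Route.snoc_lastEdge _ _ _ _).2 (Or.inl he)⟩
  | tailCollide _ he hw ih =>
    obtain ⟨ρ, h0, rfl, h1, h2, h3⟩ := ih
    exact ext ρ (undAdj he) h0 ⟨openUpTo_snoc_und h1 he _
      (fun _ => h3.imp_right fun h => ⟨h.1, Or.inr h.2⟩) (fun h => absurd h h2), by rwa [last],
      (Route.snoc_lastEdge _ _ _ _).2 (Or.inl he)⟩
  | undCollide _ he hw ih =>
    obtain ⟨ρ, h0, rfl, h1, h2, h3, h4⟩ := ih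
    exact ext ρ (undAdj he) h0 ⟨openUpTo_snoc_und h1 he _
      (fun _ => Or.inr ⟨h3.1, Or.inl (Or.inl h3.2)⟩) (fun h => absurd h h2), by rwa [last],
      (Route.snoc_lastEdge _ _ _ _).2 (Or.inl he)⟩
  | dashCollide _ he hw ih =>
    obtain ⟨ρ, h0, rfl, h1, h2, h3⟩ := ih
    exact ext ρ (undAdj he) h0 ⟨openUpTo_snoc_und h1 he _
      (fun h => absurd h2 h) (fun _ => h3), by rwa [last],
      (Route.snoc_lastEdge _ _ _ _).2 (Or.inl he)⟩
  | solidCollide _ he hw ih =>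
    obtain ⟨ρ, h0, rfl, h1, h2, h3⟩ := ih
    exact ext ρ (undAdj he) h0 ⟨openUpTo_snoc_und h1 he _
      (fun _ => Or.inr ⟨h3.1, Or.inl h3.2⟩) (fun h => absurd h h2), by rwa [last],
      (Route.snoc_lastEdge _ _ _ _).2 (Or.inl he)⟩
  | sectionUnd _ he ih =>
    obtain ⟨ρ, h0, rfl, p, h1, h2⟩ := ih
    exact ext ρ (undAdj he) h0 ⟨p, (Route.snoc_pending _ _ _ _).2 (Or.inl ⟨h1, he⟩),
      openUpTo_snoc_section h1 h2 he _⟩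
  | sectionMeet _ hZ ih =>
    obtain ⟨ρ, h0, rfl, p, h1, h2⟩ := ih
    exact ⟨ρ, h0, rfl, p, h1, h2, ρ.len, h1.2.1, le_rfl, hZ⟩
  | sectionUnd1 _ he ih =>
    obtain ⟨ρ, h0, rfl, p, h1, h2, m, h3, h4, h5⟩ := ih
    exact ext ρ (undAdj he) h0 ⟨p, (Route.snoc_pending _ _ _ _).2 (Or.inl ⟨h1, he⟩),
      openUpTo_snoc_section h1 h2 he _, m, h3, Nat.le_succ_of_le h4,
      by rwa [Route.snoc_nodes_le _ _ _ h4]⟩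
  | tailSolid _ he hf ih =>
    obtain ⟨ρ, h0, rfl, h1, h2, h3⟩ := ih
    refine ext ρ (solidAdj' he) h0 ⟨openUpTo_snoc h1 _ _ (fun h4 hc => ?_)
      (fun p hp => absurd hp (not_pending_of_tail h3 p)) (fun h => absurd h h2), by rwa [last],
      Or.inr ((Route.snoc_lastEdge _ _ _ _).2 (Or.inl he))⟩
    rcases h3 with h3 | h3
    · omega
    · exact absurd hc (G.not_colliderTriple_left h3.2)
  | tailDash _ he hf ih =>
    obtain ⟨ρ, h0, rfl, h1, h2, h3⟩ := ih
    refine ext ρ (dashAdj' he) h0 ⟨openUpTo_snoc h1 _ _ (fun h4 hc => ?_)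
      (fun p hp => absurd hp (not_pending_of_tail h3 p)) (fun h => absurd h h2), by rwa [last],
      Or.inr ((Route.snoc_lastEdge _ _ _ _).2 (Or.inr he))⟩
    rcases h3 with h3 | h3
    · omega
    · exact absurd hc (G.not_colliderTriple_left h3.2)
  | undSolid _ he hf ih =>
    obtain ⟨ρ, h0, rfl, h1, h2, h3, h4⟩ := ih
    exact ext ρ (solidAdj' he) h0 ⟨openUpTo_snoc h1 _ _
      (fun _ hc => absurd hc
        (G.not_colliderTriple_of_not_dashed (Or.inl h3.2) (Or.inr he)))
      (fun p hp => absurd hp (h4 p)) (fun h => absurd h h2), by rwa [last],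
      Or.inr ((Route.snoc_lastEdge _ _ _ _).2 (Or.inl he))⟩
  | dashSolid _ he hf ih =>
    obtain ⟨ρ, h0, rfl, h1, h2, h3⟩ := ih
    exact ext ρ (solidAdj' he) h0 ⟨openUpTo_snoc_collide h1 h2 _
      ⟨h3.1, Or.inr (Or.inr (Or.inr (Or.inl ⟨h3.2, he⟩)))⟩, by rwa [last],
      Or.inr ((Route.snoc_lastEdge _ _ _ _).2 (Or.inl he))⟩
  | dashDash _ he hf ih =>
    obtain ⟨ρ, h0, rfl, h1, h2, h3⟩ := ih
    exact ext ρ (dashAdj' he) h0 ⟨openUpTo_snoc_collide h1 h2 _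
      ⟨h3.1, Or.inl ⟨h3.2, he⟩⟩, by rwa [last],
      Or.inr ((Route.snoc_lastEdge _ _ _ _).2 (Or.inr he))⟩
  | collideDash _ he hf ih =>
    obtain ⟨ρ, h0, rfl, h1, h2, h3⟩ := ih
    refine ext ρ (dashAdj' he) h0 ⟨openUpTo_snoc_collide h1 h2 _ ⟨h3.1, ?_⟩, by rwa [last],
      Or.inr ((Route.snoc_lastEdge _ _ _ _).2 (Or.inr he))⟩
    rcases h3.2 with h4 | h4
    · exact Or.inr (Or.inr (Or.inl ⟨h4, he⟩))
    · exact Or.inr (Or.inr (Or.inr (Or.inr ⟨h4, he⟩)))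
  | sectionSolid _ he hf ih =>
    obtain ⟨ρ, h0, rfl, p, h1, h2, m, h3, h4, h5⟩ := ih
    exact ext ρ (solidAdj' he) h0 ⟨openUpTo_snoc_section_end h1 h2 he _ h3 h4 h5, by rwa [last],
      Or.inr ((Route.snoc_lastEdge _ _ _ _).2 (Or.inl he))⟩

lemma not_trav_of_sep {X Y Z : Finset V} (hsep : G.Sep X Y Z) {s : TravState} (hs : s.IsOpen)
    {y : V} (hy : y ∈ Y) : ¬ Trav G.toPreGraph X Z s y := by
  intro h
  obtain ⟨ρ, h0, rfl, hinv⟩ := exists_route_of_trav h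
  obtain ⟨h1, h2⟩ := openUpTo_of_isOpen hs hinv
  exact hsep ⟨ρ, Or.inl ⟨h0, hy⟩, Route.isZOpen_of_openUpTo h1 h2⟩

end ChainGraph

end Soundness

namespace ChainGraph

variable {G : ChainGraph V}

lemma uconn_symm {a b : V} (h : G.uconn a b) : G.uconn b a := by
  induction h with
  | refl => exact .refl
  | tail _ h2 ih => exact ih.head (PreGraph.und_symm h2)

variable {X Y Z U : Finset V}

/-- The nodes whose equation is relevant for the marginal distribution on `U`. -/
inductive Relevant (G : PreGraph V) (U : Finset V) : V → Prop
  | base {v} : v ∈ U → Relevant G U v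
  | dashed {v w} : G.dashed v w → Relevant G U w → Relevant G U v
  | solid {v c w} : G.solid v c → G.uconn c w → Relevant G U w → Relevant G U v

/-- The nodes whose chain component contains a relevant node. -/
def CompRelevant (G : PreGraph V) (U : Finset V) (k : V) : Prop :=
  ∃ w, G.uconn k w ∧ Relevant G U w

/-- A node is reached in a state from which an open route may leave through any relevant edge. -/
def Labelled (G : PreGraph V) (X Z : Finset V) (k : V) : Prop :=
  G.Trav X Z .tail k ∨ G.Trav X Z .undOut k ∨ G.Trav X Z .solidOut k ∨ G.Trav X Z .dashIn k

/-- The node or one of its mothers lies outside `Z`. -/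
def Nonconst (G : PreGraph V) (Z : Finset V) (k : V) : Prop :=
  k ∉ Z ∨ ∃ m, m ∉ Z ∧ G.dashed m k

lemma CompRelevant.of_uconn {k l : V} (h : CompRelevant G.toPreGraph U k) (hkl : G.uconn k l) :
    CompRelevant G.toPreGraph U l :=
  let ⟨w, hw, hW⟩ := h
  ⟨w, (uconn_symm hkl).trans hw, hW⟩

lemma Relevant.compRelevant {k : V} (h : Relevant G.toPreGraph U k) :
    CompRelevant G.toPreGraph U k := ⟨k, .refl, h⟩

lemma trav_notMem {H : PreGraph V} {s : TravState} {v : V} (h : H.Trav X Z s v)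
    (hs : s = .tail ∨ s = .undOut ∨ s = .solidOut) : v ∉ Z := by
  cases h <;> simp_all

lemma trav_dashIn_mem {H : PreGraph V} {v : V} (h : H.Trav X Z .dashIn v) : v ∈ Z := by
  cases h; assumption

lemma trav_section0_of_solidOut {H : PreGraph V} {s : TravState} {v : V} (h : H.Trav X Z s v)
    (hs : s = .solidOut) : H.Trav X Z .section0 v := by
  induction h with
  | solidOut h1 h2 h3 _ => exact .solidSection h1 h2 h3
  | solidUnd _ h2 _ ih => exact .sectionUnd (ih rfl) h2
  | _ => cases hs

lemma trav_section0_uconn {H : PreGraph V} {a b : V} (h : H.Trav X Z .section0 a)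
    (hab : H.uconn a b) : H.Trav X Z .section0 b := by
  induction hab with
  | refl => exact h
  | tail _ h2 ih => exact .sectionUnd ih h2

lemma trav_section1_uconn {H : PreGraph V} {a b : V} (h : H.Trav X Z .section1 a)
    (hab : H.uconn a b) : H.Trav X Z .section1 b := by
  induction hab with
  | refl => exact h
  | tail _ h2 ih => exact .sectionUnd1 ih h2

lemma trav_solidOut_uconn {H : PreGraph V} {a b : V} (h : H.Trav X Z .solidOut a)
    (hab : H.uconn a b) (hZ : ∀ c, H.uconn a c → c ∉ Z) : H.Trav X Z .solidOut b := by
  induction hab with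
  | refl => exact h
  | tail h1 h2 ih => exact .solidUnd ih h2 (hZ _ (h1.tail h2))

lemma trav_undOut_uconn {H : PreGraph V} {a b : V} (h : H.Trav X Z .tail a)
    (hab : H.uconn a b) (hZ : ∀ c, H.uconn a c → c ∉ Z) :
    H.Trav X Z .tail b ∨ H.Trav X Z .undOut b := by
  induction hab with
  | refl => exact .inl h
  | tail h1 h2 ih =>
    rcases ih with ih | ih
    · exact .inr (.tailUnd ih h2 (hZ _ (h1.tail h2)))
    · exact .inr (.undUnd ih h2 (hZ _ (h1.tail h2)))

/-- A route that has entered a chain component through a solid arrow can leave it against any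
solid arrow, provided that it can be turned around at some node of the component. -/
lemma trav_tail_of_section {k k' w f : V} (h0 : G.Trav X Z .section0 k)
    (h1 : k ∉ Z → G.Trav X Z .solidOut k) (hkw : G.uconn k w)
    (hw : G.Trav X Z .solidOut w → G.Trav X Z .tail w) (hkk : G.uconn k k')
    (hf : G.solid f k') (hfZ : f ∉ Z) : G.Trav X Z .tail f := by
  by_cases hZ : ∀ c, G.uconn k c → c ∉ Z
  · have h2 := hw (trav_solidOut_uconn (h1 (hZ k .refl)) hkw hZ)
    rcases trav_undOut_uconn h2 ((uconn_symm hkw).trans hkk)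
      (fun c hc => hZ c (hkw.trans hc)) with h3 | h3
    · exact .tailSolid h3 hf hfZ
    · exact .undSolid h3 hf hfZ
  · push Not at hZ
    obtain ⟨z, hz, hzZ⟩ := hZ
    exact .sectionSolid (trav_section1_uconn (.sectionMeet (trav_section0_uconn h0 hz) hzZ)
      ((uconn_symm hz).trans hkk)) hf hfZ

lemma labelled_of_und {k l : V} (hkl : G.und k l) (hk : Labelled G.toPreGraph X Z k)
    (hl : Nonconst G.toPreGraph Z l) : Labelled G.toPreGraph X Z l := by
  by_cases hlZ : l ∈ Z
  · obtain ⟨m, hm, hml⟩ := hl.resolve_left (not_not_intro hlZ)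
    refine .inr (.inr (.inr (.dashIn (s := .tail) trivial (.collideDash ?_ hml hm) hml hlZ)))
    rcases hk with h | h | h | h
    · exact .tailCollide h hkl hlZ
    · exact .undCollide h hkl hlZ
    · exact .solidCollide h hkl hlZ
    · exact .dashCollide h hkl hlZ
  · rcases hk with h | h | h | h
    · exact .inr (.inl (.tailUnd h hkl hlZ))
    · exact .inr (.inl (.undUnd h hkl hlZ))
    · exact .inr (.inr (.inl (.solidUnd h hkl hlZ)))
    · exact .inr (.inl (.dashUnd h hkl hlZ))

variable [DecidableEq V]

/-- Under separation, every open route to a relevant node can be turned around. -/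
lemma trav_tail_of_relevant (hsep : G.Sep X Y Z) {v : V}
    (hv : Relevant G.toPreGraph (X ∪ Y ∪ Z) v) :
    ∀ {s : TravState}, v ∉ Z → G.Trav X Z s v → s.IsOpen → G.Trav X Z .tail v := by
  induction hv with
  | @base v hv =>
    intro s hZ h hs
    rcases Finset.mem_union.1 hv with hv | hv
    · rcases Finset.mem_union.1 hv with hv | hv
      · exact .start hv hZ
      · exact (not_trav_of_sep hsep hs hv h).elim
    · exact (hZ hv).elim
  | @dashed v w hvw _ ih =>
    intro s hZ h hs
    by_cases hw : w ∈ Z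
    · exact .dashDash (.dashIn hs h hvw hw) hvw hZ
    · exact .tailDash (ih hw (.dashOut hs h hvw hw) trivial) hvw hZ
  | @solid v c w hvc hcw _ ih =>
    intro s hZ h hs
    exact trav_tail_of_section (.solidSection hs h hvc) (fun hc => .solidOut hs h hvc hc) hcw
      (fun hw => ih (trav_notMem hw (by simp)) hw trivial) .refl hvc hZ

lemma trav_iff_labelled_of_dashed (hsep : G.Sep X Y Z) {m k : V} (hmk : G.dashed m k)
    (hk : Relevant G.toPreGraph (X ∪ Y ∪ Z) k) (hm : m ∉ Z) :
    G.Trav X Z .tail m ↔ Labelled G.toPreGraph X Z k := by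
  constructor
  · intro h
    by_cases hkZ : k ∈ Z
    · exact .inr (.inr (.inr (.dashIn (s := .tail) trivial h hmk hkZ)))
    · exact .inl (trav_tail_of_relevant hsep hk hkZ (.dashOut (s := .tail) trivial h hmk hkZ)
        trivial)
  · rintro (h | h | h | h)
    · exact .tailDash h hmk hm
    · exact .tailDash (trav_tail_of_relevant hsep hk (trav_notMem h (by simp)) h trivial) hmk hm
    · exact .tailDash (trav_tail_of_relevant hsep hk (trav_notMem h (by simp)) h trivial) hmk hm
    · exact .dashDash h hmk hm

lemma trav_iff_labelled (hsep : G.Sep X Y Z) {k : V}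
    (hk : Relevant G.toPreGraph (X ∪ Y ∪ Z) k) (hkZ : k ∉ Z) :
    G.Trav X Z .tail k ↔ Labelled G.toPreGraph X Z k := by
  refine ⟨.inl, ?_⟩
  rintro (h | h | h | h)
  · exact h
  · exact trav_tail_of_relevant hsep hk hkZ h trivial
  · exact trav_tail_of_relevant hsep hk hkZ h trivial
  · exact (hkZ (trav_dashIn_mem h)).elim

lemma trav_iff_labelled_of_solid (hsep : G.Sep X Y Z) {f k : V} (hfk : G.solid f k)
    (hk : CompRelevant G.toPreGraph (X ∪ Y ∪ Z) k) (hf : f ∉ Z) (hnc : Nonconst G.toPreGraph Z k) :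
    G.Trav X Z .tail f ↔ Labelled G.toPreGraph X Z k := by
  constructor
  · intro h
    by_cases hkZ : k ∈ Z
    · obtain ⟨m, hm, hmk⟩ := hnc.resolve_left (not_not_intro hkZ)
      exact .inr (.inr (.inr (.dashIn (s := .tail) trivial
        (.collideDash (.solidIn (s := .tail) trivial h hfk hkZ) hmk hm) hmk hkZ)))
    · exact .inr (.inr (.inl (.solidOut (s := .tail) trivial h hfk hkZ)))
  · rintro (h | h | h | h)
    · exact .tailSolid h hfk hf
    · exact .undSolid h hfk hf
    · obtain ⟨w, hkw, hw⟩ := hk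
      exact trav_tail_of_section (trav_section0_of_solidOut h rfl) (fun _ => h) hkw
        (fun hw' => trav_tail_of_relevant hsep hw (trav_notMem hw' (by simp)) hw' trivial)
        .refl hfk hf
    · exact .dashSolid h hfk hf

lemma trav_of_trav_of_solid (hsep : G.Sep X Y Z) {f k f' k' : V} (hfk : G.solid f k)
    (hfk' : G.solid f' k') (hkk : G.uconn k k') (hk : CompRelevant G.toPreGraph (X ∪ Y ∪ Z) k)
    (hf' : f' ∉ Z) (h : G.Trav X Z .tail f) : G.Trav X Z .tail f' := by
  obtain ⟨w, hkw, hw⟩ := hk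
  exact trav_tail_of_section (.solidSection (s := .tail) trivial h hfk)
    (fun hkZ => .solidOut (s := .tail) trivial h hfk hkZ) hkw
    (fun hw' => trav_tail_of_relevant hsep hw (trav_notMem hw' (by simp)) hw' trivial)
    hkk hfk' hf'

end ChainGraph

section RecursiveRepresentation

/-- The rows of `M` whose index satisfies `W`; the others are replaced by zero. -/
def keepRows (W : V → Prop) (M : Matrix V V ℝ) : Matrix V V ℝ :=
  Matrix.of fun k j => if W k then M k j else 0

lemma keepRows_ne {W : V → Prop} {M : Matrix V V ℝ} {k j : V} (h : keepRows W M k j ≠ 0) :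
    W k ∧ M k j ≠ 0 := by
  simpa [keepRows] using h

lemma keepRows_of {W : V → Prop} {M : Matrix V V ℝ} {k : V} (h : W k) (j : V) :
    keepRows W M k j = M k j := if_pos h

lemma exists_ne_zero_of_mul_ne_zero [Fintype V] {M N : Matrix V V ℝ} {i j : V} (h : (M * N) i j ≠ 0) :
    ∃ k, M i k ≠ 0 ∧ N k j ≠ 0 := by
  obtain ⟨k, -, hk⟩ := Finset.exists_ne_zero_of_sum_ne_zero (by rwa [Matrix.mul_apply] at h)
  exact ⟨k, left_ne_zero_of_mul hk, right_ne_zero_of_mul hk⟩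

variable [Fintype V] [DecidableEq V]

lemma one_sub_mulVec_apply (b : Matrix V V ℝ) (u : V → ℝ) (k : V) :
    ((1 - b) *ᵥ u) k = u k - ∑ j, b k j * u j := by
  rw [Matrix.sub_mulVec, Matrix.one_mulVec]
  rfl

/-- Two solutions of a recursive linear system agree on every set of nodes which is closed under
the dependencies. -/
lemma eqOn_of_mulVec_eqOn {b : Matrix V V ℝ} {π : V → ℕ} {W : V → Prop}
    (hb : ∀ k, W k → ∀ j, b k j ≠ 0 → π j < π k ∧ W j) {u v : V → ℝ}
    (h : ∀ k, W k → ((1 - b) *ᵥ u) k = ((1 - b) *ᵥ v) k) {k : V} (hk : W k) : u k = v k := by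
  induction hn : π k using Nat.strong_induction_on generalizing k with
  | _ n ih =>
    subst hn
    have h1 := h k hk
    rw [one_sub_mulVec_apply, one_sub_mulVec_apply] at h1
    have h2 : ∑ j, b k j * u j = ∑ j, b k j * v j := Finset.sum_congr rfl fun j _ => by
      by_cases hj : b k j = 0
      · simp [hj]
      · obtain ⟨h3, h4⟩ := hb k hk j hj
        rw [ih _ h3 h4 rfl]
    linarith

lemma mulVec_injective_of_lt {b : Matrix V V ℝ} {π : V → ℕ}
    (hb : ∀ k j, b k j ≠ 0 → π j < π k) : Function.Injective (1 - b).mulVec := fun u v h =>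
  funext fun _ => eqOn_of_mulVec_eqOn (π := π) (W := fun _ => True) (u := u) (v := v)
    (fun _ _ j hj => ⟨hb _ j hj, trivial⟩) (fun k _ => congrFun h k) trivial

/-- `N(0, S)` is the distribution of the solution of the linear system `v = (B + F) v + e`, where
the errors `e` have precision matrix `A` and the coefficients follow the edges of `G`. -/
structure IsRecursiveRep (G : PreGraph V) (S A L B F : Matrix V V ℝ) : Prop where
  posDef : A.PosDef
  error_mul : L * A = 1
  cov : (1 - (B + F)) * S * (1 - (B + F))ᵀ = L
  und_of_ne : ∀ k l, A k l ≠ 0 → k = l ∨ G.und k l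
  uconn_of_ne : ∀ k l, L k l ≠ 0 → G.uconn k l
  dashed_of_ne : ∀ k j, B k j ≠ 0 → G.dashed j k
  solid_of_ne : ∀ k j, (A * F) k j ≠ 0 → G.solid j k

namespace IsRecursiveRep

variable {G : ChainGraph V} {S A L B F : Matrix V V ℝ}

lemma exists_solid (h : IsRecursiveRep G.toPreGraph S A L B F) {k j : V} (hkj : F k j ≠ 0) :
    ∃ l, G.uconn k l ∧ G.solid j l := by
  rw [← Matrix.one_mul F, ← h.error_mul, Matrix.mul_assoc] at hkj
  obtain ⟨l, h1, h2⟩ := exists_ne_zero_of_mul_ne_zero hkj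
  exact ⟨l, h.uconn_of_ne _ _ h1, h.solid_of_ne _ _ h2⟩

end IsRecursiveRep

namespace IsRecursiveRep

open ChainGraph

variable {G : ChainGraph V} {S A L B F : Matrix V V ℝ} {X Y Z U : Finset V}

lemma mul_keepRows_ne (h : IsRecursiveRep G.toPreGraph S A L B F) {k j : V}
    (hkj : (A * keepRows (CompRelevant G.toPreGraph U) F) k j ≠ 0) :
    CompRelevant G.toPreGraph U k ∧ G.solid j k := by
  have hiff : ∀ l, A k l ≠ 0 →
      (CompRelevant G.toPreGraph U l ↔ CompRelevant G.toPreGraph U k) := by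
    intro l hl
    rcases h.und_of_ne k l hl with rfl | hl
    · rfl
    · exact ⟨fun h' => h'.of_uconn (.single (PreGraph.und_symm hl)),
        fun h' => h'.of_uconn (.single hl)⟩
  obtain ⟨l, h1, h2⟩ := exists_ne_zero_of_mul_ne_zero hkj
  have hk := (hiff l h1).1 (keepRows_ne h2).1
  refine ⟨hk, h.solid_of_ne _ _ ?_⟩
  convert hkj using 1
  rw [Matrix.mul_apply, Matrix.mul_apply]
  refine Finset.sum_congr rfl fun l _ => ?_
  by_cases hl : A k l = 0
  · simp [hl]
  · rw [keepRows_of ((hiff l hl).2 hk)]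

/-- The precision matrix of the reduced system does not connect labelled and unlabelled nodes. -/
lemma reduced_precision_eq_zero (h : IsRecursiveRep G.toPreGraph S A L B F)
    (hsep : G.Sep X Y Z) {B' F' : Matrix V V ℝ}
    (hB : B' = keepRows (Relevant G.toPreGraph (X ∪ Y ∪ Z)) B)
    (hF : F' = keepRows (CompRelevant G.toPreGraph (X ∪ Y ∪ Z)) F) {i j : V} (hi : i ∉ Z)
    (hj : j ∉ Z)
    (hij : ¬ (Labelled G.toPreGraph X Z i ↔ Labelled G.toPreGraph X Z j)) :
    ((1 - (B' + F'))ᵀ * A * (1 - (B' + F')) : Matrix V V ℝ) i j = 0 := by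
  have hAT : Aᵀ = A := by simpa using h.posDef.isHermitian.eq
  have hR : ∀ {k i}, i ∉ Z → (1 - B') k i ≠ 0 →
      Nonconst G.toPreGraph Z k ∧ (Labelled G.toPreGraph X Z i ↔ Labelled G.toPreGraph X Z k) := by
    intro k i hi hki
    by_cases hki' : k = i
    · subst hki'
      exact ⟨.inl hi, .rfl⟩
    · have h1 : B' k i ≠ 0 := by simpa [hki'] using hki
      rw [hB] at h1
      obtain ⟨h2, h3⟩ := keepRows_ne h1
      have h4 := h.dashed_of_ne _ _ h3
      exact ⟨.inr ⟨i, hi, h4⟩, (trav_iff_labelled hsep (.dashed h4 h2) hi).symm.trans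
        (trav_iff_labelled_of_dashed hsep h4 h2 hi)⟩
  have hA : ∀ {k l}, A k l ≠ 0 → Nonconst G.toPreGraph Z k → Nonconst G.toPreGraph Z l →
      (Labelled G.toPreGraph X Z k ↔ Labelled G.toPreGraph X Z l) := by
    intro k l hkl hk hl
    rcases h.und_of_ne k l hkl with rfl | hkl
    · rfl
    · exact ⟨fun h' => labelled_of_und hkl h' hl,
        fun h' => labelled_of_und (PreGraph.und_symm hkl) h' hk⟩
  have hRF : ∀ {i j}, i ∉ Z → j ∉ Z →
      ((1 - B')ᵀ * (A * F') : Matrix V V ℝ) i j ≠ 0 →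
      (Labelled G.toPreGraph X Z i ↔ Labelled G.toPreGraph X Z j) := by
    intro i j hi hj hij
    obtain ⟨k, h1, h2⟩ := exists_ne_zero_of_mul_ne_zero hij
    obtain ⟨h3, h4⟩ := hR hi h1
    rw [hF] at h2
    obtain ⟨h5, h6⟩ := h.mul_keepRows_ne h2
    exact h4.trans ((trav_iff_labelled_of_solid hsep h6 h5 hj h3).symm.trans
      (trav_iff_labelled hsep (let ⟨w, hw, hW⟩ := h5; .solid h6 hw hW) hj))
  have hexp : (1 - (B' + F'))ᵀ * A * (1 - (B' + F')) =
      (1 - B')ᵀ * A * (1 - B') - (1 - B')ᵀ * (A * F') - ((1 - B')ᵀ * (A * F'))ᵀ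
        + (A * F')ᵀ * F' := by
    simp only [Matrix.transpose_mul, Matrix.transpose_sub, Matrix.transpose_add,
      Matrix.transpose_transpose, hAT, Matrix.transpose_one]
    noncomm_ring
  rw [hexp]
  have h1 : ((1 - B')ᵀ * A * (1 - B') : Matrix V V ℝ) i j = 0 := by
    by_contra hne
    obtain ⟨l, h1, h2⟩ := exists_ne_zero_of_mul_ne_zero hne
    obtain ⟨k, h3, h4⟩ := exists_ne_zero_of_mul_ne_zero h1
    obtain ⟨h5, h6⟩ := hR hi h3
    obtain ⟨h7, h8⟩ := hR hj h2
    exact hij (h6.trans ((hA h4 h5 h7).trans h8.symm))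
  have h2 : ((1 - B')ᵀ * (A * F') : Matrix V V ℝ) i j = 0 := by
    by_contra hne
    exact hij (hRF hi hj hne)
  have h3 : ((1 - B')ᵀ * (A * F'))ᵀ i j = 0 := by
    by_contra hne
    exact hij (hRF hj hi hne).symm
  have h4 : ((A * F')ᵀ * F') i j = 0 := by
    by_contra hne
    obtain ⟨k, h1, h2⟩ := exists_ne_zero_of_mul_ne_zero hne
    rw [Matrix.transpose_apply] at h1
    rw [hF] at h1 h2
    obtain ⟨h3, h4⟩ := h.mul_keepRows_ne h1
    obtain ⟨l, h5, h6⟩ := h.exists_solid (keepRows_ne h2).2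
    have h7 := h3.of_uconn h5
    refine hij ((trav_iff_labelled hsep (let ⟨w, hw, hW⟩ := h3; .solid h4 hw hW) hi).symm.trans
      (Iff.trans ⟨?_, ?_⟩
        (trav_iff_labelled hsep (let ⟨w, hw, hW⟩ := h7; .solid h6 hw hW) hj)))
    · exact trav_of_trav_of_solid hsep h4 h6 h5 h3 hj
    · exact trav_of_trav_of_solid hsep h6 h4 (uconn_symm h5) h7 hi
  rw [Matrix.add_apply, Matrix.sub_apply, Matrix.sub_apply, h1, h2, h3, h4]
  norm_num

/-- A Gaussian distribution with a recursive representation satisfies the global Markov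
property. -/
theorem globalMP (h : IsRecursiveRep G.toPreGraph S A L B F) (hS : S.PosDef) {π : V → ℕ}
    (hπ : G.IsTopoOrder π) : G.globalMP (gaussCI S) := by
  rintro X Y Z ⟨hXY, hXZ, hYZ⟩ hsep
  rw [gaussCI_iff hS hXZ]
  intro x hx
  set U := X ∪ Y ∪ Z with hU
  set B' := keepRows (Relevant G.toPreGraph U) B with hB
  set F' := keepRows (CompRelevant G.toPreGraph U) F with hF
  set N := 1 - (B + F) with hN
  set N' := 1 - (B' + F') with hN'
  have hlt : ∀ k j, (B + F) k j ≠ 0 → π j < π k := by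
    intro k j hkj
    by_cases hBkj : B k j = 0
    · rw [Matrix.add_apply, hBkj, zero_add] at hkj
      obtain ⟨l, h1, h2⟩ := h.exists_solid hkj
      rw [hπ.1 _ _ h1]
      exact hπ.2 _ _ (.inl h2)
    · exact hπ.2 _ _ (.inr (h.dashed_of_ne _ _ hBkj))
  have hrel : ∀ k, Relevant G.toPreGraph U k → ∀ j, (B + F) k j ≠ 0 →
      Relevant G.toPreGraph U j := by
    intro k hk j hkj
    by_cases hBkj : B k j = 0
    · rw [Matrix.add_apply, hBkj, zero_add] at hkj
      obtain ⟨l, h1, h2⟩ := h.exists_solid hkj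
      exact .solid h2 (uconn_symm h1) hk
    · exact .dashed (h.dashed_of_ne _ _ hBkj) hk
  have hlt' : ∀ k j, (B' + F') k j ≠ 0 → π j < π k ∧ Relevant G.toPreGraph U j := by
    intro k j hkj
    by_cases hBkj : B' k j = 0
    · rw [Matrix.add_apply, hBkj, zero_add] at hkj
      obtain ⟨h3, h4⟩ := keepRows_ne hkj
      obtain ⟨l, h1, h2⟩ := h.exists_solid h4
      obtain ⟨w, h5, h6⟩ := h3.of_uconn h1
      rw [hπ.1 _ _ h1]
      exact ⟨hπ.2 _ _ (.inl h2), .solid h2 h5 h6⟩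
    · obtain ⟨h1, h2⟩ := keepRows_ne hBkj
      have h3 := h.dashed_of_ne _ _ h2
      exact ⟨hπ.2 _ _ (.inr h3), .dashed h3 h1⟩
  have hrow : ∀ k, Relevant G.toPreGraph U k → ∀ j, (B' + F') k j = (B + F) k j := by
    intro k hk j
    rw [Matrix.add_apply, Matrix.add_apply, hB, hF, keepRows_of hk, keepRows_of hk.compRelevant]
  have hP : (N'ᵀ * A * N').PosDef := by
    rw [← Matrix.conjTranspose_eq_transpose_of_trivial]
    exact h.posDef.conjTranspose_mul_mul_same
      (mulVec_injective_of_lt fun k j hkj => (hlt' k j hkj).1)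
  have hAT : Aᵀ = A := by simpa using h.posDef.isHermitian.eq
  let T : Finset V := Finset.univ.filter fun v => v ∉ Z ∧ Labelled G.toPreGraph X Z v
  have hxZ : x ∉ Z := Finset.disjoint_left.1 hXZ hx
  have hxT : x ∈ T := 
    Finset.mem_filter.2 ⟨Finset.mem_univ _, hxZ, .inl (.start hx hxZ)⟩
  obtain ⟨g, hg0, hg⟩ := exists_supported_solution hP T x hxT
  set c := (N'ᵀ * A * N') *ᵥ g with hc
  have hc0 : ∀ v, v ≠ x → v ∉ Z → c v = 0 := by
    intro v hvx hvZ
    by_cases hvT : v ∈ T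
    · rw [hg v hvT, if_neg hvx]
    · refine Finset.sum_eq_zero fun u _ => ?_
      by_cases huT : u ∈ T
      · have hu := (Finset.mem_filter.1 huT).2
        have hv : ¬ Labelled G.toPreGraph X Z v := fun hv =>
          hvT (Finset.mem_filter.2 ⟨Finset.mem_univ _, hvZ, hv⟩)
        have := h.reduced_precision_eq_zero hsep hB hF hvZ hu.1 (fun h' => hv (h'.2 hu.2))
        exact (congrArg (· * g u) this).trans (zero_mul _)
      · simp [hg0 u huT]
  refine ⟨c, by rw [hg x hxT, if_pos rfl], hc0, ?_⟩
  set s := A *ᵥ (N' *ᵥ g) with hs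
  have hsc : N'ᵀ *ᵥ s = c := by
    rw [hs, hc, Matrix.mulVec_mulVec, Matrix.mulVec_mulVec]
  have htr : ∀ (b : Matrix V V ℝ) v, ((1 - b)ᵀ *ᵥ s) v = s v - ∑ i, b i v * s i := by
    intro b v
    rw [Matrix.transpose_sub, Matrix.transpose_one, one_sub_mulVec_apply]
    rfl
  have hs0 : ∀ k, ¬ Relevant G.toPreGraph U k → s k = 0 := by
    intro k hk
    have h1 : c k = 0 := hc0 k (fun hkx => hk (.base (by simp [hU, hkx, hx])))
      (fun hkZ => hk (.base (by simp [hU, hkZ])))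
    rw [← hsc, hN', htr, Finset.sum_eq_zero, sub_zero] at h1
    · exact h1
    · intro i _
      by_contra hne
      exact hk (hlt' i k (left_ne_zero_of_mul hne)).2
  have hsc' : Nᵀ *ᵥ s = c := by
    rw [← hsc]
    ext v
    rw [hN, hN', htr, htr]
    congr 1
    refine Finset.sum_congr rfl fun i _ => ?_
    by_cases hi : Relevant G.toPreGraph U i
    · rw [hrow i hi]
    · rw [hs0 i hi, mul_zero, mul_zero]
  have hNS : N *ᵥ (S *ᵥ c) = N' *ᵥ g := by
    rw [← hsc', Matrix.mulVec_mulVec, Matrix.mulVec_mulVec, h.cov, hs, Matrix.mulVec_mulVec,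
      h.error_mul, Matrix.one_mulVec]
  have heq : ∀ k, Relevant G.toPreGraph U k → (S *ᵥ c) k = g k := fun k hk =>
    eqOn_of_mulVec_eqOn (π := π) (fun k hk j hkj => ⟨hlt k j hkj, hrel k hk j hkj⟩)
      (fun k hk => by
        rw [← hN, hNS, hN', one_sub_mulVec_apply, one_sub_mulVec_apply]
        congr 1
        exact Finset.sum_congr rfl fun j _ => by rw [hrow k hk]) hk
  intro w hw
  have hwU : Relevant G.toPreGraph U w := .base (by
    rcases hw with hw | hw <;> simp [hU, hw])
  have hwT : w ∉ T := by
    intro hwT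
    obtain ⟨hwZ, hwl⟩ := (Finset.mem_filter.1 hwT).2
    exact not_trav_of_sep hsep (s := .tail) trivial (hw.resolve_right hwZ)
      ((trav_iff_labelled hsep hwU hwZ).2 hwl)
  rw [← hg0 w hwT, ← heq w hwU]
  refine Finset.sum_congr rfl fun v _ => ?_
  have hsym : S v w = S w v := by simpa using hS.isHermitian.apply w v
  rw [hsym, mul_comm]

end IsRecursiveRep

end RecursiveRepresentation

section TopologicalOrder

namespace ChainGraph

variable (G : ChainGraph V)

lemma exists_seq_of_reflTransGen {r : V → V → Prop} {a b : V} (h : Relation.ReflTransGen r a b) :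
    ∃ (f : ℕ → V) (n : ℕ), f 0 = a ∧ f n = b ∧ ∀ i < n, r (f i) (f (i + 1)) := by
  induction h using Relation.ReflTransGen.head_induction_on with
  | refl => exact ⟨fun _ => b, 0, rfl, rfl, fun i hi => absurd hi (Nat.not_lt_zero i)⟩
  | @head a c hac _ ih =>
    obtain ⟨f, n, h0, hn, hf⟩ := ih
    refine ⟨fun i => Nat.casesOn i a f, n + 1, rfl, hn, fun i hi => ?_⟩
    cases i with
    | zero => simpa [h0] using hac
    | succ i => exact hf i (Nat.lt_of_succ_lt_succ hi)

lemma not_reflTransGen_of_directed {a b : V} (h : G.solid a b ∨ G.dashed a b) :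
    ¬ Relation.ReflTransGen G.fwd b a := by
  intro hba
  obtain ⟨f, n, h0, hn, hf⟩ := exists_seq_of_reflTransGen hba
  refine G.no_semidirected_cycle
    ⟨fun i => Nat.casesOn i a f, n + 1, n.succ_pos, hn, by simpa [h0] using h, fun i hi => ?_⟩
  cases i with
  | zero =>
    subst h0
    exact .inr h
  | succ i => exact hf i (Nat.lt_of_succ_lt_succ hi)

lemma reflTransGen_of_uconn {a b : V} (h : G.uconn a b) : Relation.ReflTransGen G.fwd a b := by
  induction h with
  | refl => exact .refl
  | tail _ h2 ih => exact ih.tail (.inl h2)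

variable [Fintype V]

lemma mem_cc {H : PreGraph V} {a b : V} : b ∈ H.cc a ↔ H.uconn a b := by
  simp [PreGraph.cc]

lemma cc_eq_of_uconn {a b : V} (h : G.uconn a b) : G.cc a = G.cc b := by
  ext c
  rw [mem_cc, mem_cc]
  exact ⟨fun h' => (uconn_symm h).trans h', fun h' => h.trans h'⟩

/-- There is a topological ordering in which every component has its own value. -/
lemma exists_topoOrder : ∃ π : V → ℕ, G.IsTopoOrder π ∧ ∀ a b, π a = π b → G.uconn a b := by
  let anc : V → Finset V := fun v => Finset.univ.filter fun w => Relation.ReflTransGen G.fwd w v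
  let e := Fintype.equivFin (Finset V)
  have hlt : ∀ s, (e s : ℕ) < Fintype.card (Finset V) := fun s => (e s).2
  refine ⟨fun v => (anc v).card * Fintype.card (Finset V) + e (G.cc v), ⟨?_, ?_⟩, ?_⟩
  · intro a b hab
    have h1 : anc a = anc b := by
      ext c
      simp only [anc, Finset.mem_filter, Finset.mem_univ, true_and]
      exact ⟨fun h => h.trans (G.reflTransGen_of_uconn hab),
        fun h => h.trans (G.reflTransGen_of_uconn (uconn_symm hab))⟩
    simp only [h1, G.cc_eq_of_uconn hab]
  · intro a b hab
    have h1 : (anc a).card < (anc b).card := by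
      refine Finset.card_lt_card ⟨fun c hc => ?_, fun hsub => ?_⟩
      · exact Finset.mem_filter.2 ⟨Finset.mem_univ _, (Finset.mem_filter.1 hc).2.tail (.inr hab)⟩
      · exact G.not_reflTransGen_of_directed hab (Finset.mem_filter.1
          (hsub (Finset.mem_filter.2 ⟨Finset.mem_univ b, .refl⟩))).2
    have h2 := Nat.mul_le_mul_right (Fintype.card (Finset V)) (Nat.succ_le_of_lt h1)
    have h3 := hlt (G.cc a)
    rw [Nat.succ_mul] at h2
    show _ + _ < _ + _
    omega
  · intro a b hab
    have h1 : G.cc a = G.cc b := by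
      have h2 := congrArg (· % Fintype.card (Finset V)) hab
      simp only [Nat.mul_add_mod', Nat.mod_eq_of_lt (hlt _)] at h2
      exact e.injective (Fin.ext h2)
    rw [← mem_cc, h1, mem_cc]
    exact .refl

end ChainGraph

end TopologicalOrder

section Representation

namespace ChainGraph

section Membership

variable [Fintype V]

lemma self_mem_cc (G : ChainGraph V) (k : V) : k ∈ G.cc k := mem_cc.2 .refl

lemma mem_fa {H : PreGraph V} {K : Finset V} {b : V} : b ∈ H.fa K ↔ ∃ a ∈ K, H.solid b a := by
  simp [PreGraph.fa]

lemma mem_mo {H : PreGraph V} {K : Finset V} {b : V} : b ∈ H.mo K ↔ ∃ a ∈ K, H.dashed b a := by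
  simp [PreGraph.mo]

lemma mem_nb {H : PreGraph V} {K : Finset V} {b : V} : b ∈ H.nb K ↔ ∃ a ∈ K, H.und b a := by
  simp [PreGraph.nb]

lemma mem_pa [DecidableEq V] {H : PreGraph V} {K : Finset V} {b : V} :
    b ∈ H.pa K ↔ b ∈ H.fa K ∨ b ∈ H.mo K := Finset.mem_union

end Membership

end ChainGraph

variable [DecidableEq V]

/-- The regression coefficients of `X` on `Z`, extended by zero. -/
def regr (S : Matrix V V ℝ) (X Z : Finset V) : Matrix V V ℝ :=
  Matrix.of fun x q => if h : x ∈ X ∧ q ∈ Z then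
    (msub S X Z * (msub S Z Z)⁻¹) ⟨x, h.1⟩ ⟨q, h.2⟩ else 0

lemma regr_apply (S : Matrix V V ℝ) {X Z : Finset V} (x : X) (q : Z) :
    regr S X Z x q = (msub S X Z * (msub S Z Z)⁻¹) x q := dif_pos ⟨x.2, q.2⟩

lemma regr_eq_zero (S : Matrix V V ℝ) {X Z : Finset V} {x q : V} (hq : q ∉ Z) :
    regr S X Z x q = 0 := dif_neg fun h => hq h.2

variable [Fintype V]

lemma residual_apply (S : Matrix V V ℝ) {X Y Z : Finset V} (x : X) (y : Y) :
    (msub S X Y - msub S X Z * (msub S Z Z)⁻¹ * msub S Z Y) x y =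
      S x y - ∑ q, regr S X Z x q * S q y := by
  rw [← sum_subtype_eq_sum (P := Z) _ fun q hq => by rw [regr_eq_zero S hq, zero_mul],
    Matrix.sub_apply, Matrix.mul_apply]
  congr 1
  exact Finset.sum_congr rfl fun q _ => by rw [regr_apply]; rfl

lemma regr_normal {S : Matrix V V ℝ} (hS : S.PosDef) {X Z : Finset V} {x p : V} (hx : x ∈ X)
    (hp : p ∈ Z) : ∑ q, regr S X Z x q * S q p = S x p := by
  rw [← sum_subtype_eq_sum (P := Z) _ fun q hq => by rw [regr_eq_zero S hq, zero_mul],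
    ← regression_normal hS (⟨x, hx⟩ : X) (⟨p, hp⟩ : Z)]
  exact Finset.sum_congr rfl fun q _ => by rw [← regr_apply]

namespace ChainGraph

variable (G : ChainGraph V) (S : Matrix V V ℝ)

/-- The regression coefficients of every node on the parents of its component. -/
def coef : Matrix V V ℝ := Matrix.of fun k j => regr S (G.cc k) (G.pa (G.cc k)) k j

/-- The block diagonal matrix with blocks `Λ_K`. -/
def errCov : Matrix V V ℝ :=
  Matrix.of fun k l => if l ∈ G.cc k then ((1 - G.coef S) * S) k l else 0

/-- The block diagonal matrix with blocks `Λ_K⁻¹`. -/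
def errPrec : Matrix V V ℝ :=
  Matrix.of fun k l => if h : l ∈ G.cc k then
    (msub (G.errCov S) (G.cc k) (G.cc k))⁻¹ ⟨k, G.self_mem_cc k⟩ ⟨l, h⟩ else 0

/-- The coefficients of the solid arrows. -/
def solidCoef : Matrix V V ℝ :=
  Matrix.of fun k j => if j ∈ G.fa (G.cc k) then G.coef S k j else 0

/-- The coefficients of the dashed arrows. -/
def dashedCoef : Matrix V V ℝ :=
  Matrix.of fun k j => if j ∈ G.mo (G.cc k) then G.coef S k j else 0

variable {G S}

lemma cc_mem_ccs (H : PreGraph V) (k : V) : H.cc k ∈ H.ccs :=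
  Finset.mem_image_of_mem _ (Finset.mem_univ k)

lemma coef_ne {k j : V} (h : G.coef S k j ≠ 0) : j ∈ G.pa (G.cc k) :=
  by_contra fun h' => h (regr_eq_zero S h')

lemma lt_of_mem_pa {π : V → ℕ} (hπ : G.IsTopoOrder π) {k j : V} (h : j ∈ G.pa (G.cc k)) :
    π j < π k := by
  rcases mem_pa.1 h with h | h
  · obtain ⟨a, ha, hja⟩ := mem_fa.1 h
    rw [hπ.1 _ _ (mem_cc.1 ha)]
    exact hπ.2 _ _ (.inl hja)
  · obtain ⟨a, ha, hja⟩ := mem_mo.1 h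
    rw [hπ.1 _ _ (mem_cc.1 ha)]
    exact hπ.2 _ _ (.inr hja)

lemma one_sub_mul_apply (b M : Matrix V V ℝ) (k l : V) :
    ((1 - b) * M) k l = M k l - ∑ q, b k q * M q l := by
  rw [Matrix.sub_mul, Matrix.one_mul]
  rfl

lemma residual_eq_zero (hS : S.PosDef) {π : V → ℕ} (hπ : G.IsTopoOrder π) (h1 : G.eq1 S)
    {k p : V} (hp : π p < π k) : ((1 - G.coef S) * S) k p = 0 := by
  rw [one_sub_mul_apply]
  by_cases hpa : p ∈ G.pa (G.cc k)
  · rw [sub_eq_zero]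
    exact (regr_normal hS (G.self_mem_cc k) hpa).symm
  · have h2 := congrFun (congrFun (h1 π hπ k) ⟨k, G.self_mem_cc k⟩)
      ⟨p, Finset.mem_sdiff.2 ⟨Finset.mem_filter.2 ⟨Finset.mem_univ _, hp⟩, hpa⟩⟩
    rw [residual_apply] at h2
    exact h2

lemma errCov_eq (hS : S.PosDef) {π : V → ℕ} (hπ : G.IsTopoOrder π)
    (hinj : ∀ a b, π a = π b → G.uconn a b) (h1 : G.eq1 S) :
    (1 - G.coef S) * S * (1 - G.coef S)ᵀ = G.errCov S := by
  have hST : Sᵀ = S := by simpa using hS.isHermitian.eq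
  set R : Matrix V V ℝ := (1 - G.coef S) * S * (1 - G.coef S)ᵀ with hR
  have hsym : ∀ k l, R k l = R l k := by
    intro k l
    have hRT : Rᵀ = R := by
      rw [hR, Matrix.transpose_mul, Matrix.transpose_mul, Matrix.transpose_transpose, hST,
        Matrix.mul_assoc]
    exact congrFun (congrFun hRT l) k
  have hle : ∀ k l, π l ≤ π k → R k l = ((1 - G.coef S) * S) k l := by
    intro k l hlk
    rw [hR, Matrix.transpose_sub, Matrix.transpose_one, Matrix.mul_sub, Matrix.mul_one,
      Matrix.sub_apply, Matrix.mul_apply (M := (1 - G.coef S) * S), Finset.sum_eq_zero, sub_zero]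
    intro p _
    by_cases hp : G.coef S l p = 0
    · rw [Matrix.transpose_apply, hp, mul_zero]
    · rw [residual_eq_zero hS hπ h1 ((lt_of_mem_pa hπ (coef_ne hp)).trans_le hlk), zero_mul]
  ext k l
  rw [errCov, Matrix.of_apply]
  split_ifs with h
  · exact hle k l (hπ.1 _ _ (mem_cc.1 h)).ge
  · rcases lt_trichotomy (π l) (π k) with hlt | heq | hlt
    · rw [hle k l hlt.le, residual_eq_zero hS hπ h1 hlt]
    · exact (h (mem_cc.2 (hinj _ _ heq.symm))).elim
    · rw [hsym, hle l k hlt.le, residual_eq_zero hS hπ h1 hlt]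

lemma errCov_posDef (hS : S.PosDef) {π : V → ℕ} (hπ : G.IsTopoOrder π)
    (hinj : ∀ a b, π a = π b → G.uconn a b) (h1 : G.eq1 S) : (G.errCov S).PosDef := by
  rw [← errCov_eq hS hπ hinj h1, ← Matrix.conjTranspose_eq_transpose_of_trivial]
  refine hS.mul_mul_conjTranspose_same (Matrix.vecMul_injective_iff_isUnit.2
    (Matrix.mulVec_injective_iff_isUnit.1 (mulVec_injective_of_lt (π := π) fun k j hkj =>
      lt_of_mem_pa hπ (coef_ne hkj))))

lemma errPrec_ne {k l : V} (h : G.errPrec S k l ≠ 0) : l ∈ G.cc k :=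
  by_contra fun h' => h (dif_neg h')

lemma errPrec_mul (hL : (G.errCov S).PosDef) : G.errPrec S * G.errCov S = 1 := by
  ext k l
  have hu : IsUnit (msub (G.errCov S) (G.cc k) (G.cc k)).det :=
    (Matrix.isUnit_iff_isUnit_det _).1 (msub_posDef hL _).isUnit
  rw [Matrix.mul_apply]
  by_cases hl : l ∈ G.cc k
  · have h1 := congrFun (congrFun (Matrix.nonsing_inv_mul _ hu) ⟨k, G.self_mem_cc k⟩) ⟨l, hl⟩
    rw [Matrix.mul_apply, Matrix.one_apply] at h1
    simp only [Subtype.mk.injEq] at h1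
    rw [Matrix.one_apply, ← h1, ← sum_subtype_eq_sum (P := G.cc k) _ fun j hj => by
      rw [errPrec, Matrix.of_apply, dif_neg hj, zero_mul]]
    refine Finset.sum_congr rfl fun j _ => ?_
    rw [errPrec, Matrix.of_apply, dif_pos j.2]
    rfl
  · have hkl : k ≠ l := fun h => hl (h ▸ G.self_mem_cc k)
    rw [Matrix.one_apply_ne hkl]
    refine Finset.sum_eq_zero fun j _ => ?_
    by_cases hj : G.errPrec S k j = 0
    · rw [hj, zero_mul]
    · have h2 := errPrec_ne hj
      rw [errCov, Matrix.of_apply, if_neg, mul_zero]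
      rwa [← G.cc_eq_of_uconn (mem_cc.1 h2)]

lemma msub_errCov (k : V) : msub (G.errCov S) (G.cc k) (G.cc k) = G.lam S (G.cc k) := by
  ext a l
  have ha := G.cc_eq_of_uconn (mem_cc.1 a.2)
  rw [PreGraph.lam, residual_apply, msub, Matrix.of_apply, errCov, Matrix.of_apply,
    if_pos (ha ▸ l.2), one_sub_mul_apply]
  simp only [coef, Matrix.of_apply, ← ha]

/-- The restrictions of Equations 1 and 6–8 yield a recursive representation. -/
lemma isRecursiveRep_of_eqs (hG : G.IsUCG) (hS : S.PosDef) {π : V → ℕ} (hπ : G.IsTopoOrder π)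
    (hinj : ∀ a b, π a = π b → G.uconn a b) (h : G.eqs S) :
    IsRecursiveRep G.toPreGraph S (G.errPrec S) (G.errCov S) (G.dashedCoef S) (G.solidCoef S) := by
  obtain ⟨h1, h6, h7, h8⟩ := h
  have hL := errCov_posDef hS hπ hinj h1
  have hinv := errPrec_mul hL
  have hsum : G.dashedCoef S + G.solidCoef S = G.coef S := by
    ext k j
    simp only [Matrix.add_apply, dashedCoef, solidCoef, Matrix.of_apply]
    have hdisj : j ∈ G.fa (G.cc k) → j ∉ G.mo (G.cc k) :=
      fun h => Finset.disjoint_left.1 (hG _ (cc_mem_ccs _ k)) h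
    by_cases hj : G.coef S k j = 0
    · simp [hj]
    · rcases mem_pa.1 (coef_ne hj) with hf | hm
      · rw [if_neg (hdisj hf), if_pos hf, zero_add]
      · rw [if_neg fun hf => hdisj hf hm, if_pos hm, add_zero]
  refine ⟨?_, mul_eq_one_comm.1 hinv, ?_, ?_, ?_, ?_, ?_⟩
  · rw [← Matrix.inv_eq_left_inv hinv]
    exact hL.inv
  · rw [hsum]
    exact errCov_eq hS hπ hinj h1
  · intro k l hkl
    by_contra hne
    rw [not_or] at hne
    have hl := errPrec_ne hkl
    refine hkl ?_
    rw [errPrec, Matrix.of_apply, dif_pos hl, msub_errCov]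
    refine h8 _ (cc_mem_ccs _ k) k _ l hl (Ne.symm hne.1) fun hnb => hne.2 ?_
    obtain ⟨a, ha, hla⟩ := mem_nb.1 hnb
    rw [Finset.mem_singleton.1 ha] at hla
    exact PreGraph.und_symm hla
  · intro k l hkl
    by_contra hne
    exact hkl (if_neg fun h => hne (mem_cc.1 h))
  · intro k j hkj
    by_contra hne
    have hm : j ∈ G.mo (G.cc k) := by_contra fun h => hkj (if_neg h)
    rw [dashedCoef, Matrix.of_apply, if_pos hm] at hkj
    have hpa := coef_ne hkj
    refine hkj ((regr_apply S ⟨k, G.self_mem_cc k⟩ ⟨j, hpa⟩).trans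
      (h6 _ (cc_mem_ccs _ k) k (G.self_mem_cc k) j hpa hm fun h => hne ?_))
    obtain ⟨a, ha, hja⟩ := mem_mo.1 h
    rwa [Finset.mem_singleton.1 ha] at hja
  · intro k j hkj
    have hf : j ∈ G.fa (G.cc k) := by
      by_contra hf
      obtain ⟨l, hl, hlj⟩ := exists_ne_zero_of_mul_ne_zero hkj
      refine hlj (if_neg ?_)
      rwa [← G.cc_eq_of_uconn (mem_cc.1 (errPrec_ne hl))]
    have hpa : j ∈ G.pa (G.cc k) := mem_pa.2 (.inl hf)
    have hprod : (G.errPrec S * G.solidCoef S) k j = (G.errPrec S * G.coef S) k j := by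
      rw [Matrix.mul_apply, Matrix.mul_apply]
      refine Finset.sum_congr rfl fun l _ => ?_
      by_cases hl : G.errPrec S k l = 0
      · rw [hl, zero_mul, zero_mul]
      · rw [solidCoef, Matrix.of_apply, if_pos]
        rwa [← G.cc_eq_of_uconn (mem_cc.1 (errPrec_ne hl))]
    have hlow : ∀ {v}, v ∈ G.pa (G.cc k) → v ∉ G.cc k := fun hv hv' =>
      (lt_of_mem_pa hπ hv).ne (hπ.1 _ _ (mem_cc.1 hv')).symm
    set w : V → ℝ := (G.errPrec S * (1 - G.coef S)) k with hw
    have hwv : ∀ v, w v = G.errPrec S k v - (G.errPrec S * G.coef S) k v := fun v => by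
      rw [hw, Matrix.mul_sub, Matrix.mul_one]
      rfl
    have hw0 : ∀ v, v ∉ G.cc k ∪ G.pa (G.cc k) → w v = 0 := by
      intro v hv
      rw [Finset.mem_union, not_or] at hv
      have h2 : G.errPrec S k v = 0 := dif_neg hv.1
      have h3 : (G.errPrec S * G.coef S) k v = 0 := by
        by_contra hne
        obtain ⟨l, hl, hlv⟩ := exists_ne_zero_of_mul_ne_zero hne
        refine hv.2 ?_
        rw [G.cc_eq_of_uconn (mem_cc.1 (errPrec_ne hl))]
        exact coef_ne hlv
      rw [hwv, h2, h3, sub_zero]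
    have hwS : ∀ v ∈ G.cc k ∪ G.pa (G.cc k), ∑ u, w u * S u v = if v = k then 1 else 0 := by
      intro v hv
      have h2 : ∑ u, w u * S u v = (G.errPrec S * ((1 - G.coef S) * S)) k v := by
        rw [← Matrix.mul_assoc]
        rfl
      rw [h2]
      rcases Finset.mem_union.1 hv with hv | hv
      · have h3 := congrFun (congrFun hinv k) v
        rw [Matrix.one_apply] at h3
        simp only [eq_comm (a := k)] at h3
        rw [← h3, Matrix.mul_apply, Matrix.mul_apply]
        refine Finset.sum_congr rfl fun l _ => ?_
        by_cases hl : G.errPrec S k l = 0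
        · rw [hl, zero_mul, zero_mul]
        · rw [errCov, Matrix.of_apply, if_pos]
          rwa [← G.cc_eq_of_uconn (mem_cc.1 (errPrec_ne hl))]
      · have hvk : v ≠ k := fun hvk => hlow hv (hvk ▸ G.self_mem_cc k)
        rw [if_neg hvk, Matrix.mul_apply]
        refine Finset.sum_eq_zero fun l _ => ?_
        by_cases hl : G.errPrec S k l = 0
        · rw [hl, zero_mul]
        · rw [residual_eq_zero hS hπ h1, mul_zero]
          rw [← hπ.1 _ _ (mem_cc.1 (errPrec_ne hl))]
          exact lt_of_mem_pa hπ hv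
    by_contra hne
    have h2 := inv_msub_entry hS (G.cc k ∪ G.pa (G.cc k))
      ⟨k, Finset.mem_union_left _ (G.self_mem_cc k)⟩ 1 w hw0 hwS
      ⟨j, Finset.mem_union_right _ hpa⟩
    have h3 := h7 _ (cc_mem_ccs _ k) k (G.self_mem_cc k) j hpa hf fun h => hne (by
      obtain ⟨a, ha, hja⟩ := mem_fa.1 h
      rwa [Finset.mem_singleton.1 ha] at hja)
    rw [PreGraph.om] at h3
    rw [h3, mul_zero, hwv] at h2
    have h4 : G.errPrec S k j = 0 := dif_neg (hlow hpa)
    rw [h4, ← hprod, zero_sub, zero_eq_neg] at h2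
    exact hkj h2

lemma globalMP_of_eqs (hG : G.IsUCG) (hS : S.PosDef) (h : G.eqs S) : G.globalMP (gaussCI S) := by
  obtain ⟨π, hπ, hinj⟩ := G.exists_topoOrder
  exact (isRecursiveRep_of_eqs hG hS hπ hinj h).globalMP hS hπ

end ChainGraph

end Representation

section Separation

namespace PreGraph

variable {H : PreGraph V}

lemma adj_symm {a b : V} (h : H.adj a b) : H.adj b a := by
  unfold adj at *
  rcases h with h | h | h | h | h
  · exact .inl h.symm
  all_goals tauto

lemma colliderTriple_symm {a b c : V} (h : H.colliderTriple a c b) : H.colliderTriple b c a := by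
  unfold colliderTriple at *
  rcases h with h | h | h | h | h
  · exact .inl h.symm
  · exact .inr (.inr (.inl ⟨und_symm h.2, h.1⟩))
  · exact .inr (.inl ⟨h.2, und_symm h.1⟩)
  all_goals tauto

namespace Route

/-- The route traversed backwards. -/
def rev (ρ : H.Route) : H.Route where
  len := ρ.len
  nodes i := ρ.nodes (ρ.len - i)
  adj_step i hi := by
    have h := adj_symm (ρ.adj_step (ρ.len - (i + 1)) (by omega))
    rwa [show ρ.len - (i + 1) + 1 = ρ.len - i by omega] at h

lemma colliderNodeAt_rev {ρ : H.Route} {k : ℕ} (hk : k ≤ ρ.len) :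
    ρ.rev.colliderNodeAt k ↔ ρ.colliderNodeAt (ρ.len - k) := by
  have hiff : 1 ≤ k → k < ρ.len →
      (H.colliderTriple (ρ.nodes (ρ.len - (k - 1))) (ρ.nodes (ρ.len - k))
        (ρ.nodes (ρ.len - (k + 1))) ↔ H.colliderTriple (ρ.nodes (ρ.len - k - 1))
        (ρ.nodes (ρ.len - k)) (ρ.nodes (ρ.len - k + 1))) := by
    intro h1 h2
    rw [show ρ.len - (k - 1) = ρ.len - k + 1 by omega,
      show ρ.len - (k + 1) = ρ.len - k - 1 by omega]
    exact ⟨colliderTriple_symm, colliderTriple_symm⟩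
  constructor
  · rintro ⟨h1, h2, h3⟩
    have h2 : k < ρ.len := h2
    exact ⟨by omega, by omega, (hiff h1 h2).1 h3⟩
  · rintro ⟨h1, h2, h3⟩
    have h4 : 1 ≤ k := by omega
    have h5 : k < ρ.len := by omega
    exact ⟨h4, h5, (hiff h4 h5).2 h3⟩

lemma colliderSectionOcc_rev {ρ : H.Route} {p q : ℕ} (h : ρ.rev.colliderSectionOcc p q) :
    ρ.colliderSectionOcc (ρ.len - q) (ρ.len - p) := by
  obtain ⟨h1, h2, h3, h4, h5, h6⟩ := h
  simp only [rev] at h3 h4 h5 h6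
  refine ⟨by omega, by omega, by omega, fun m hm hm' => ?_, ?_, ?_⟩
  · have := und_symm (h4 (ρ.len - (m + 1)) (by omega) (by omega))
    rwa [show ρ.len - (ρ.len - (m + 1)) = m + 1 by omega,
      show ρ.len - (ρ.len - (m + 1) + 1) = m by omega] at this
  · rwa [show ρ.len - q - 1 = ρ.len - (q + 1) by omega]
  · rwa [show ρ.len - p + 1 = ρ.len - (p - 1) by omega]

lemma colliderSectionOcc_of_rev {ρ : H.Route} {p q : ℕ} (h : ρ.colliderSectionOcc p q) :
    ρ.rev.colliderSectionOcc (ρ.len - q) (ρ.len - p) := by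
  obtain ⟨h1, h2, h3, h4, h5, h6⟩ := h
  refine ⟨by omega, by omega, show _ ≤ ρ.len by omega, fun m hm hm' => ?_, ?_, ?_⟩ <;>
    simp only [rev]
  · have := und_symm (h4 (ρ.len - (m + 1)) (by omega) (by omega))
    rwa [show ρ.len - (m + 1) + 1 = ρ.len - m by omega] at this
  · rwa [show ρ.len - (ρ.len - q - 1) = q + 1 by omega, show ρ.len - (ρ.len - q) = q by omega]
  · rwa [show ρ.len - (ρ.len - p + 1) = p - 1 by omega, show ρ.len - (ρ.len - p) = p by omega]

lemma IsZOpen.rev {ρ : H.Route} {Z : Finset V} (h : ρ.IsZOpen Z) : ρ.rev.IsZOpen Z := by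
  refine ⟨fun k hk => ?_, fun p q hpq => ?_, fun k hk h1 h2 => ?_⟩
  · have hkl : k < ρ.len := hk.2.1
    exact h.1 _ ((colliderNodeAt_rev hkl.le).1 hk)
  · obtain ⟨m, hm, hm', hmZ⟩ := h.2.1 _ _ (colliderSectionOcc_rev hpq)
    have h3 : q + 1 ≤ ρ.len := hpq.2.2.1
    have h4 := hpq.2.1
    refine ⟨ρ.len - m, by omega, by omega, ?_⟩
    show ρ.nodes (ρ.len - (ρ.len - m)) ∈ Z
    rwa [show ρ.len - (ρ.len - m) = m by omega]
  · have hk : k ≤ ρ.len := hk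
    refine h.2.2 _ (Nat.sub_le _ _) (fun h3 => h1 ((colliderNodeAt_rev hk).2 h3)) ?_
    rintro ⟨p, q, hpq, hp, hq⟩
    have h3 := hpq.2.2.1
    exact h2 ⟨_, _, colliderSectionOcc_of_rev hpq, by omega, by omega⟩

end Route

/-- Separation only requires to look at routes in one direction. -/
lemma sep_of_forall {X Y Z : Finset V}
    (h : ∀ ρ : H.Route, ρ.nodes 0 ∈ X → ρ.nodes ρ.len ∈ Y → ¬ ρ.IsZOpen Z) : H.Sep X Y Z := by
  rintro ⟨ρ, ⟨h1, h2⟩ | ⟨h1, h2⟩, h3⟩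
  · exact h ρ h1 h2 h3
  · refine h ρ.rev h2 ?_ h3.rev
    show ρ.nodes (ρ.len - ρ.len) ∈ Y
    rwa [Nat.sub_self]

lemma IsTopoOrder.cases_adj {π : V → ℕ} (hπ : H.IsTopoOrder π) {a b : V} (h : H.adj a b) :
    (π a = π b ∧ H.und a b) ∨ (π a < π b ∧ (H.solid a b ∨ H.dashed a b)) ∨
      (π b < π a ∧ (H.solid b a ∨ H.dashed b a)) := by
  rcases h with h | h | h | h | h
  · exact .inl ⟨hπ.1 _ _ (.single h), h⟩
  · exact .inr (.inl ⟨hπ.2 _ _ (.inl h), .inl h⟩)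
  · exact .inr (.inr ⟨hπ.2 _ _ (.inl h), .inl h⟩)
  · exact .inr (.inl ⟨hπ.2 _ _ (.inr h), .inr h⟩)
  · exact .inr (.inr ⟨hπ.2 _ _ (.inr h), .inr h⟩)

/-- An open route does not rise above its end points and the conditioning set. -/
lemma le_of_isZOpen {π : V → ℕ} (hπ : H.IsTopoOrder π) {Z : Finset V} {n : ℕ} {ρ : H.Route}
    (hρ : ρ.IsZOpen Z) (hZ : ∀ z ∈ Z, π z ≤ n) (h0 : π (ρ.nodes 0) ≤ n)
    (h1 : π (ρ.nodes ρ.len) ≤ n) {k : ℕ} (hk : k ≤ ρ.len) : π (ρ.nodes k) ≤ n := by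
  obtain ⟨k0, hk0, hmax⟩ := Finset.exists_max_image (Finset.range (ρ.len + 1))
    (fun k => π (ρ.nodes k)) ⟨0, by simp⟩
  have hmax : ∀ j ≤ ρ.len, π (ρ.nodes j) ≤ π (ρ.nodes k0) := fun j hj =>
    hmax j (Finset.mem_range_succ_iff.2 hj)
  have hk0 := Finset.mem_range_succ_iff.1 hk0
  refine (hmax k hk).trans (not_lt.1 fun hlt => ?_)
  set M := π (ρ.nodes k0) with hM
  have hp : ∃ p, p ≤ ρ.len ∧ π (ρ.nodes p) = M := ⟨k0, hk0, rfl⟩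
  obtain ⟨hpl, hpM⟩ := Nat.find_spec hp
  have hpmin : ∀ j, j < Nat.find hp → j ≤ ρ.len → π (ρ.nodes j) < M := fun j hj hjl =>
    lt_of_le_of_ne (hmax j hjl) fun h => Nat.find_min hp hj ⟨hjl, h⟩
  set p := Nat.find hp
  have hp1 : 1 ≤ p := Nat.one_le_iff_ne_zero.2 fun h => by
    rw [h] at hpM
    omega
  have hr : ∃ r, p ≤ r ∧ r ≤ ρ.len ∧ π (ρ.nodes r) ≠ M := ⟨ρ.len, hpl, le_rfl, by omega⟩
  obtain ⟨hpr, hrl, hrM⟩ := Nat.find_spec hr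
  have hrmin : ∀ j, p ≤ j → j < Nat.find hr → π (ρ.nodes j) = M := fun j hpj hj =>
    by_contra fun h => Nat.find_min hr hj ⟨hpj, by omega, h⟩
  set r := Nat.find hr
  obtain ⟨q, hq⟩ : ∃ q, r = q + 1 := ⟨r - 1, by
    have : r ≠ p := fun h => hrM (h ▸ hpM)
    omega⟩
  rw [hq] at hrM hrl hrmin hpr
  have hpq : p ≤ q := by
    have : q + 1 ≠ p := fun h => hrM (h ▸ hpM)
    omega
  have hqM := hrmin q hpq (by omega)
  have hnotZ : ∀ m, p ≤ m → m ≤ q → ρ.nodes m ∉ Z := fun m hm hm' hmZ => by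
    have h2 := hZ _ hmZ
    have h3 := hrmin m hm (by omega)
    omega
  have hund : ∀ m, p ≤ m → m < q → H.und (ρ.nodes m) (ρ.nodes (m + 1)) := by
    intro m hm hm'
    have h2 := hrmin m hm (by omega)
    have h3 := hrmin (m + 1) (by omega) (by omega)
    rcases hπ.cases_adj (ρ.adj_step m (by omega)) with h | h | h
    · exact h.2
    · omega
    · omega
  have hin : H.solid (ρ.nodes (p - 1)) (ρ.nodes p) ∨ H.dashed (ρ.nodes (p - 1)) (ρ.nodes p) := by
    have h2 := hpmin (p - 1) (by omega) (by omega)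
    have h3 := ρ.adj_step (p - 1) (by omega)
    rw [Nat.sub_add_cancel hp1] at h3
    rcases hπ.cases_adj h3 with h | h | h
    · omega
    · exact h.2
    · omega
  have hout : H.solid (ρ.nodes (q + 1)) (ρ.nodes q) ∨ H.dashed (ρ.nodes (q + 1)) (ρ.nodes q) := by
    have h2 := lt_of_le_of_ne (hmax _ hrl) hrM
    rcases hπ.cases_adj (ρ.adj_step q (by omega)) with h | h | h
    · omega
    · omega
    · exact h.2
  rcases hin with hin | hin
  · rcases hout with hout | hout
    · obtain ⟨m, hm, hm', hmZ⟩ := hρ.2.1 p q ⟨hp1, hpq, hrl, hund, hin, hout⟩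
      exact hnotZ m hm hm' hmZ
    · refine hnotZ q hpq le_rfl (hρ.1 q ⟨by omega, by omega, ?_⟩)
      rcases hpq.lt_or_eq with hlt | heq
      · have := hund (q - 1) (by omega) (by omega)
        rw [show q - 1 + 1 = q by omega] at this
        exact .inr (.inr (.inl ⟨this, hout⟩))
      · rw [← heq] at hout ⊢
        exact .inr (.inr (.inr (.inr ⟨hin, hout⟩)))
  · refine hnotZ p le_rfl hpq (hρ.1 p ⟨hp1, by omega, ?_⟩)
    rcases hpq.lt_or_eq with hlt | heq
    · exact .inr (.inl ⟨hin, hund p le_rfl hlt⟩)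
    · rw [← heq] at hout
      rcases hout with hout | hout
      · exact .inr (.inr (.inr (.inl ⟨hin, hout⟩)))
      · exact .inl ⟨hin, hout⟩

end PreGraph

namespace ChainGraph

variable {G : ChainGraph V}

lemma notMem_of_tail {Z : Finset V} {ρ : G.Route} (hρ : ρ.IsZOpen Z) {k : ℕ} (hk : k < ρ.len)
    (h : G.solid (ρ.nodes (k + 1)) (ρ.nodes k) ∨ G.dashed (ρ.nodes (k + 1)) (ρ.nodes k)) :
    ρ.nodes (k + 1) ∉ Z := by
  refine hρ.2.2 (k + 1) hk (fun hc => ?_) ?_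
  · exact G.not_colliderTriple_left h hc.2.2
  · rintro ⟨p, q, ⟨h1, -, -, h2, h3, -⟩, h4, h5⟩
    rcases h4.lt_or_eq with h4 | rfl
    · have h6 := h2 k (by omega) (by omega)
      exact h.elim (G.not_solid_of_und h6).2 (G.not_dashed_of_und h6).2
    · rcases h with h | h
      · exact G.solid_not_solid _ _ h3 h
      · exact G.solid_not_dashed_rev _ _ h3 h

variable [Fintype V] [DecidableEq V] {π : V → ℕ}

lemma step_of_le (hπ : G.IsTopoOrder π) {i a b : V} (ha : a ∈ G.cc i) (h : G.adj a b)
    (hb : π b ≤ π i) : (b ∈ G.cc i ∧ G.und a b) ∨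
      (b ∈ G.pa (G.cc i) ∧ (G.solid b a ∨ G.dashed b a)) := by
  have hai := hπ.1 _ _ (mem_cc.1 ha)
  rcases hπ.cases_adj h with h | h | h
  · exact .inl ⟨mem_cc.2 ((mem_cc.1 ha).tail h.2), h.2⟩
  · omega
  · exact .inr ⟨mem_pa.2 (h.2.imp (fun h => mem_fa.2 ⟨a, ha, h⟩) fun h => mem_mo.2 ⟨a, ha, h⟩), h.2⟩

lemma disjoint_cc_pa (G : ChainGraph V) (i : V) : Disjoint (G.cc i) (G.pa (G.cc i)) := by
  obtain ⟨π, hπ, -⟩ := G.exists_topoOrder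
  exact Finset.disjoint_left.2 fun a ha hp =>
    (lt_of_mem_pa hπ hp).ne (hπ.1 _ _ (mem_cc.1 ha)).symm

lemma sep_preceding (hπ : G.IsTopoOrder π) (i : V) :
    G.Sep (G.cc i) ((Finset.univ.filter fun b => π b < π i) \ G.pa (G.cc i)) (G.pa (G.cc i)) := by
  refine PreGraph.sep_of_forall fun ρ h0 h1 hρ => ?_
  have hlt : π (ρ.nodes ρ.len) < π i := (Finset.mem_filter.1 (Finset.mem_sdiff.1 h1).1).2
  have hle := fun k (hk : k ≤ ρ.len) => PreGraph.le_of_isZOpen hπ hρ (n := π i)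
    (fun z hz => (lt_of_mem_pa hπ hz).le) (hπ.1 _ _ (mem_cc.1 h0)).ge hlt.le hk
  have hmem : ∀ k ≤ ρ.len, ρ.nodes k ∈ G.cc i := by
    intro k
    induction k with
    | zero => exact fun _ => h0
    | succ k ih =>
      intro hk
      rcases step_of_le hπ (ih (by omega)) (ρ.adj_step k hk) (hle _ hk) with h | h
      · exact h.1
      · exact (notMem_of_tail hρ hk h.2 h.1).elim
  exact hlt.ne (hπ.1 _ _ (mem_cc.1 (hmem _ le_rfl))).symm

lemma sep_mother (hG : G.IsUCG) {i j : V} (hj : j ∈ G.mo (G.cc i)) (hji : ¬ G.dashed j i) :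
    G.Sep {i} {j} (G.pa (G.cc i) \ {j}) := by
  obtain ⟨π, hπ, -⟩ := G.exists_topoOrder
  have hjp : j ∈ G.pa (G.cc i) := mem_pa.2 (.inr hj)
  refine PreGraph.sep_of_forall fun ρ h0 h1 hρ => ?_
  rw [Finset.mem_singleton] at h0 h1
  have hle := fun k (hk : k ≤ ρ.len) => PreGraph.le_of_isZOpen hπ hρ (n := π i)
    (fun z hz => (lt_of_mem_pa hπ (Finset.mem_sdiff.1 hz).1).le) (by rw [h0])
    (by rw [h1]; exact (lt_of_mem_pa hπ hjp).le) hk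
  have hmem : ∀ k ≤ ρ.len, ρ.nodes k ∈ G.cc i ∧
      (k = 0 ∨ (1 ≤ k ∧ G.und (ρ.nodes (k - 1)) (ρ.nodes k))) := by
    intro k
    induction k with
    | zero => exact fun _ => ⟨h0 ▸ G.self_mem_cc _, .inl rfl⟩
    | succ k ih =>
      intro hk
      obtain ⟨ih1, ih2⟩ := ih (by omega)
      rcases step_of_le hπ ih1 (ρ.adj_step k hk) (hle _ hk) with h | h
      · exact ⟨h.1, .inr ⟨by omega, h.2⟩⟩
      · exfalso
        have hkj : ρ.nodes (k + 1) = j := by_contra fun hne => notMem_of_tail hρ hk h.2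
          (Finset.mem_sdiff.2 ⟨h.1, by simpa using hne⟩)
        have hd : G.dashed (ρ.nodes (k + 1)) (ρ.nodes k) := h.2.resolve_left fun hs =>
          Finset.disjoint_left.1 (hG _ (cc_mem_ccs _ i)) (mem_fa.2 ⟨_, ih1, hkj ▸ hs⟩) hj
        rcases ih2 with rfl | ⟨h2, h3⟩
        · rw [hkj, h0] at hd
          exact hji hd
        · have h4 := hρ.1 k ⟨h2, hk, .inr (.inr (.inl ⟨h3, hd⟩))⟩
          exact Finset.disjoint_left.1 (G.disjoint_cc_pa i) ih1 (Finset.mem_sdiff.1 h4).1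
  exact Finset.disjoint_left.1 (G.disjoint_cc_pa i) (hmem _ le_rfl).1 (h1 ▸ hjp)

lemma sep_pair {i j : V} (hj : j ∈ G.cc i ∪ G.pa (G.cc i)) (hij : j ≠ i) (hund : ¬ G.und i j)
    (hsol : ¬ G.solid j i) (hmo : j ∉ G.mo (G.cc i)) :
    G.Sep {i} {j} ((G.cc i ∪ G.pa (G.cc i)) \ {i, j}) := by
  obtain ⟨π, hπ, -⟩ := G.exists_topoOrder
  have hT : ∀ z ∈ G.cc i ∪ G.pa (G.cc i), π z ≤ π i := fun z hz => by
    rcases Finset.mem_union.1 hz with hz | hz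
    · exact (hπ.1 _ _ (mem_cc.1 hz)).ge
    · exact (lt_of_mem_pa hπ hz).le
  refine PreGraph.sep_of_forall fun ρ h0 h1 hρ => ?_
  rw [Finset.mem_singleton] at h0 h1
  have hle := fun k (hk : k ≤ ρ.len) => PreGraph.le_of_isZOpen hπ hρ (n := π i)
    (fun z hz => hT z (Finset.mem_sdiff.1 hz).1) (by rw [h0]) (by rw [h1]; exact hT j hj) hk
  have hlen : 0 < ρ.len := Nat.pos_of_ne_zero fun h => hij (by rw [← h1, h, h0])
  have hpar : ∀ k < ρ.len, ρ.nodes k ∈ G.cc i → ρ.nodes (k + 1) ∈ G.pa (G.cc i) →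
      (G.solid (ρ.nodes (k + 1)) (ρ.nodes k) ∨ G.dashed (ρ.nodes (k + 1)) (ρ.nodes k)) →
      ρ.nodes (k + 1) = j := by
    intro k hk _ hp ht
    by_contra hne
    refine notMem_of_tail hρ hk ht (Finset.mem_sdiff.2 ⟨Finset.mem_union_right _ hp, ?_⟩)
    have : ρ.nodes (k + 1) ≠ i := fun h =>
      Finset.disjoint_left.1 (G.disjoint_cc_pa i) (G.self_mem_cc i) (h ▸ hp)
    simp [hne, this]
  have hmem0 : ρ.nodes 0 ∈ G.cc i := h0 ▸ G.self_mem_cc _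
  rcases step_of_le hπ hmem0 (ρ.adj_step 0 hlen) (hle 1 hlen) with ⟨h2, h3⟩ | ⟨h2, h3⟩
  · rw [h0] at h3
    have hne : ρ.nodes 1 ≠ j := fun h => hund (h ▸ h3)
    have hne' : ρ.nodes 1 ≠ i := fun h => by
      rw [zero_add, h] at h3
      exact h3.elim (G.undir_irrefl i) (G.undir_irrefl i)
    have hZ : ρ.nodes 1 ∈ (G.cc i ∪ G.pa (G.cc i)) \ {i, j} :=
      Finset.mem_sdiff.2 ⟨Finset.mem_union_left _ h2, by simp [hne, hne']⟩
    by_cases hcol : ρ.colliderNodeAt 1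
    · obtain ⟨-, h4, h5⟩ := hcol
      have h6 : G.dashed (ρ.nodes 2) (ρ.nodes 1) := by
        rw [Nat.sub_self, h0] at h5
        have h7 := (G.not_dashed_of_und h3).1
        have h8 := (G.not_solid_of_und h3).1
        rcases h5 with h5 | h5 | h5 | h5 | h5
        · exact h5.2
        · exact (h7 h5.1).elim
        · exact h5.2
        · exact (h7 h5.1).elim
        · exact h5.2
      have h7 : ρ.nodes 2 ∈ G.mo (G.cc i) := mem_mo.2 ⟨_, h2, h6⟩
      exact hmo (hpar 1 h4 h2 (mem_pa.2 (.inr h7)) (.inr h6) ▸ h7)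
    · refine hρ.2.2 1 hlen hcol ?_ hZ
      rintro ⟨p, q, ⟨h4, -, -, -, h5, -⟩, h6, -⟩
      obtain rfl : p = 1 := le_antisymm h6 h4
      rw [Nat.sub_self, h0] at h5
      exact (G.not_solid_of_und h3).1 h5
  · have h4 := hpar 0 hlen hmem0 h2 h3
    rw [h4, h0] at h3
    exact h3.elim hsol fun h => hmo (mem_mo.2 ⟨i, G.self_mem_cc i, h⟩)

end ChainGraph

end Separation

section Necessity

variable [Fintype V] [DecidableEq V] {S : Matrix V V ℝ}

/-- A pairwise independence given the rest of `T` yields a vector supported on `T`, vanishing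
at `j`, whose image under `S` restricted to `T` is concentrated at `i`. -/
lemma exists_vector_of_gaussCI_pair (hS : S.PosDef) {T : Finset V} {i j : V} (hi : i ∈ T)
    (hij : j ≠ i) (h : gaussCI S {i} {j} (T \ {i, j})) :
    ∃ (c : V → ℝ) (t : ℝ), c i = 1 ∧ c j = 0 ∧ (∀ v, v ∉ T → c v = 0) ∧
      ∀ w ∈ T, ∑ v, c v * S v w = if w = i then t else 0 := by
  have hdisj : Disjoint {i} (T \ {i, j}) := Finset.disjoint_singleton_left.2 (by simp)
  obtain ⟨c, h1, h0, hc⟩ := (gaussCI_iff hS hdisj).1 h i (Finset.mem_singleton_self i)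
  refine ⟨c, ∑ v, c v * S v i, h1, h0 j hij (by simp), fun v hv => h0 v ?_ ?_, fun w hw => ?_⟩
  · exact fun h => hv (h ▸ hi)
  · exact fun h => hv (Finset.mem_sdiff.1 h).1
  · split_ifs with hwi
    · rw [hwi]
    · refine hc w ?_
      by_cases hwj : w = j
      · exact .inl (Finset.mem_singleton.2 hwj)
      · exact .inr (Finset.mem_sdiff.2 ⟨hw, by simp [hwi, hwj]⟩)

/-- A vector supported on `K ∪ P`, whose image under `S` restricted to `K ∪ P` is concentrated
at `j ∈ K`, gives the `j`-th column of the inverse of the residual covariance of `K` given `P`. -/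
lemma inv_residual_entry (hS : S.PosDef) {K P : Finset V} (hKP : Disjoint K P) (i j : K) {t : ℝ}
    {c : V → ℝ} (hc : ∀ v, v ∉ K ∪ P → c v = 0)
    (h : ∀ w ∈ K ∪ P, ∑ v, c v * S v w = if w = j then t else 0) {L : Matrix K K ℝ}
    (hL : L = msub S K K - msub S K P * (msub S P P)⁻¹ * msub S P K) (hu : IsUnit L.det) :
    L⁻¹ i j * t = c i := by
  have hsymm : ∀ v w, S v w = S w v := fun v w => by simpa using hS.isHermitian.apply w v
  have key : L *ᵥ (fun v : K => c v) = t • Pi.single j 1 := by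
    funext l
    have hres : ∀ v : K, L l v = S l v - ∑ q, regr S K P l q * S q v := fun v => by
      rw [hL, residual_apply]
    have hsum : ∀ w, ∑ v, S w v * c v = ∑ v, c v * S v w := fun w =>
      Finset.sum_congr rfl fun v _ => by rw [hsymm, mul_comm]
    rw [Matrix.mulVec, dotProduct]
    simp only [hres]
    rw [sum_subtype_eq_sum (P := K) (fun v => (S l v - ∑ q, regr S K P l q * S q v) * c v)]
    · simp only [sub_mul, Finset.sum_sub_distrib, Finset.sum_mul]
      rw [Finset.sum_comm, hsum, h l (Finset.mem_union_left _ l.2), Finset.sum_eq_zero, sub_zero]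
      · by_cases hl : l = j
        · simp [hl]
        · simp [hl, Subtype.coe_injective.ne hl]
      · intro q _
        simp only [mul_assoc, ← Finset.mul_sum]
        by_cases hq : q ∈ P
        · have hqj : q ≠ j := fun hqj => Finset.disjoint_left.1 hKP j.2 (hqj ▸ hq)
          rw [hsum, h q (Finset.mem_union_right _ hq), if_neg hqj, mul_zero]
        · rw [regr_eq_zero S hq, zero_mul]
    · intro v hv
      by_cases hvP : v ∈ P
      · rw [regr_normal hS l.2 hvP, sub_self, zero_mul]
      · rw [hc v (by simp [hv, hvP]), mul_zero]
  have h2 : (fun v : K => c v) = L⁻¹ *ᵥ (t • Pi.single j 1) := by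
    rw [← key, Matrix.mulVec_mulVec, Matrix.nonsing_inv_mul _ hu, Matrix.one_mulVec]
  refine Eq.trans ?_ (congrFun h2 i).symm
  rw [Matrix.mulVec_smul, Matrix.mulVec_single_one, mul_comm]
  rfl

namespace ChainGraph

variable {G : ChainGraph V}

lemma exists_eq_cc {K : Finset V} (hK : K ∈ G.ccs) {i : V} (hi : i ∈ K) : K = G.cc i := by
  obtain ⟨k, -, rfl⟩ := Finset.mem_image.1 hK
  exact G.cc_eq_of_uconn (mem_cc.1 hi)

lemma eq1_of_globalMP (h : G.globalMP (gaussCI S)) : G.eq1 S := fun _ hπ i =>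
  h _ _ _ ⟨Finset.disjoint_left.2 fun _ ha hb =>
    (Finset.mem_filter.1 (Finset.mem_sdiff.1 hb).1).2.ne (hπ.1 _ _ (mem_cc.1 ha)).symm,
    G.disjoint_cc_pa i, Finset.sdiff_disjoint⟩ (sep_preceding hπ i)

lemma eq6_of_globalMP (hG : G.IsUCG) (hS : S.PosDef) (h : G.globalMP (gaussCI S)) : G.eq6 S := by
  intro K hK i hi j hj hjm hji
  obtain rfl := exists_eq_cc hK hi
  have hnot : i ∉ G.pa (G.cc i) := Finset.disjoint_left.1 (G.disjoint_cc_pa i) hi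
  have hij : i ≠ j := fun h => hnot (h ▸ hj)
  have hdisj : Disjoint {i} (G.pa (G.cc i) \ {j}) :=
    Finset.disjoint_singleton_left.2 fun h => hnot (Finset.mem_sdiff.1 h).1
  obtain ⟨c, h1, h0, hc⟩ := (gaussCI_iff hS hdisj).1 (h _ _ _
    ⟨by simpa using hij, hdisj, Finset.disjoint_singleton_left.2 (by simp)⟩
    (sep_mother hG hjm fun h => hji (mem_mo.2 ⟨i, Finset.mem_singleton_self i, h⟩))) i
    (Finset.mem_singleton_self i)
  rw [PreGraph.beta, regression_eq_of_normal hS ⟨i, hi⟩ (fun q => (if q = i then 1 else 0) - c q)]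
  · simp [hij.symm, h0 j hij.symm (by simp)]
  · intro q hq
    by_cases hqi : q = i
    · simp [hqi, h1]
    · simp [hqi, h0 q hqi fun h => hq (Finset.mem_sdiff.1 h).1]
  · intro p hp
    have hcp : ∑ v, c v * S v p = 0 := hc p (by
      by_cases hpj : p = j
      · exact .inl (Finset.mem_singleton.2 hpj)
      · exact .inr (Finset.mem_sdiff.2 ⟨hp, by simpa using hpj⟩))
    simp [sub_mul, hcp]

lemma exists_vector_of_globalMP (hS : S.PosDef) (h : G.globalMP (gaussCI S)) {i j : V}
    (hj : j ∈ G.cc i ∪ G.pa (G.cc i)) (hij : j ≠ i) (hund : ¬ G.und i j)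
    (hsol : ¬ G.solid j i) (hmo : j ∉ G.mo (G.cc i)) :
    ∃ (c : V → ℝ) (t : ℝ), c i = 1 ∧ c j = 0 ∧ (∀ v, v ∉ G.cc i ∪ G.pa (G.cc i) → c v = 0) ∧
      ∀ w ∈ G.cc i ∪ G.pa (G.cc i), ∑ v, c v * S v w = if w = i then t else 0 :=
  exists_vector_of_gaussCI_pair hS (Finset.mem_union_left _ (G.self_mem_cc i)) hij
    (h _ _ _ ⟨by simpa using hij.symm, Finset.disjoint_singleton_left.2 (by simp),
      Finset.disjoint_singleton_left.2 (by simp)⟩ (sep_pair hj hij hund hsol hmo))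

lemma eq7_of_globalMP (hG : G.IsUCG) (hS : S.PosDef) (h : G.globalMP (gaussCI S)) : G.eq7 S := by
  intro K hK i hi j hj hjf hji
  obtain rfl := exists_eq_cc hK hi
  have hjK : j ∉ G.cc i := Finset.disjoint_right.1 (G.disjoint_cc_pa i) hj
  obtain ⟨c, t, h1, h2, h0, hc⟩ := exists_vector_of_globalMP hS h (Finset.mem_union_right _ hj)
    (fun h => hjK (h ▸ hi)) (fun h => hjK (mem_cc.2 (.single h)))
    (fun h => hji (mem_fa.2 ⟨i, Finset.mem_singleton_self i, h⟩))
    (Finset.disjoint_left.1 (hG _ hK) hjf)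
  have h3 := inv_msub_entry hS _ ⟨i, Finset.mem_union_left _ hi⟩ t c h0 hc
  have h4 := h3 ⟨i, Finset.mem_union_left _ hi⟩
  rw [h1] at h4
  exact (mul_eq_zero.1 ((h3 ⟨j, Finset.mem_union_right _ hj⟩).trans h2)).resolve_left
    (left_ne_zero_of_mul_eq_one h4)

lemma eq8_of_globalMP (hS : S.PosDef) (h : G.globalMP (gaussCI S)) : G.eq8 S := by
  intro K hK i hi j hj hji hnb
  obtain rfl := exists_eq_cc hK hj
  by_cases hu : IsUnit (G.lam S (G.cc j)).det
  · obtain ⟨π, hπ, -⟩ := G.exists_topoOrder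
    obtain ⟨c, t, h1, h2, h0, hc⟩ := exists_vector_of_globalMP hS h (Finset.mem_union_left _ hi)
      hji.symm (fun h => hnb (mem_nb.2 ⟨i, Finset.mem_singleton_self i, h⟩))
      (fun h => (hπ.2 _ _ (.inl h)).ne (hπ.1 _ _ (mem_cc.1 hi)).symm)
      (fun h => Finset.disjoint_left.1 (G.disjoint_cc_pa j) hi (mem_pa.2 (.inr h)))
    have h3 := fun l : G.cc j =>
      inv_residual_entry hS (G.disjoint_cc_pa j) l ⟨j, hj⟩ h0 hc (L := G.lam S (G.cc j)) rfl hu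
    have h4 := h3 ⟨j, hj⟩
    rw [h1] at h4
    exact (mul_eq_zero.1 ((h3 ⟨i, hi⟩).trans h2)).resolve_right (right_ne_zero_of_mul_eq_one h4)
  · rw [Matrix.nonsing_inv_apply_not_isUnit _ hu, Matrix.zero_apply]

lemma eqs_of_globalMP (hG : G.IsUCG) (hS : S.PosDef) (h : G.globalMP (gaussCI S)) : G.eqs S :=
  ⟨eq1_of_globalMP h, eq6_of_globalMP hG hS h, eq7_of_globalMP hG hS h, eq8_of_globalMP hS h⟩

end ChainGraph

end Necessity

/-- **Theorem 2.** A Gaussian distribution `N(0, Σ)` with positive definite `Σ` satisfies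
Equation 1 and the zero restrictions of Equations 6–8 with respect to a UCG `G` if and only
if it satisfies the global Markov property with respect to `G`. -/
theorem ucg_zero_restrictions_iff_global_markov
    {V : Type*} [Fintype V] [DecidableEq V] (G : ChainGraph V) (hG : G.IsUCG)
    (S : Matrix V V ℝ) (hS : S.PosDef) :
    G.toPreGraph.eqs S ↔ G.toPreGraph.globalMP (gaussCI S) :=
  ⟨ChainGraph.globalMP_of_eqs hG hS, ChainGraph.eqs_of_globalMP hG hS⟩
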